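/- Let C > 0 be a constant and let X be an ℝ^d random vector with a log-concave Lebesgue density, E[X] = 0, and all eigenvalues of Cov(X) in [C^{-1}, C]. Then there exists a constant L > 0, depending only on C, such that for any unit vectors u, v ∈ ℝ^d: L^{-1}·‖u − v‖² ≤ E[|u'X|·1(sgn(u'X) ≠ sgn(v'X))] ≤ L·‖u − v‖². Moreover, the upper bound continues to hold if the assumption E[X] = 0 is replaced by ‖E[X]‖ ≤ C. -/

import Mathlib

open MeasureTheory Matrix

noncomputable section

/-- The Euclidean norm of a vector in `Fin d → ℝ`. -/
def eNorm {d : ℕ} (x : Fin d → ℝ) : ℝ := Real.sqrt (∑ i, x i ^ 2)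

/-- A nonnegative function `p` on `ℝ^d` is log-concave. -/
def IsLogConcaveFn {d : ℕ} (p : (Fin d → ℝ) → ℝ) : Prop :=
  ∀ x y : Fin d → ℝ, ∀ t : ℝ, 0 ≤ t → t ≤ 1 →
    p x ^ t * p y ^ (1 - t) ≤ p (t • x + (1 - t) • y)

open scoped Pointwise in
lemma lc_image_vol (l c : ℝ) (hl : 0 < l) (K : Set ℝ) :
    volume ((fun x => l * x + c) '' K) = ENNReal.ofReal l * volume K := by
  have h : (fun x => l * x + c) '' K = (fun y => y + c) '' (l • K) := by
    rw [← Set.image_smul, Set.image_image]; rfl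
  rw [h, Set.image_add_right, measure_preimage_add_right, Measure.addHaar_smul]
  simp [abs_of_pos hl]

lemma bm_compact {K J S : Set ℝ} (hK : IsCompact K) (hJ : IsCompact J) (hK0 : K.Nonempty)
    (hJ0 : J.Nonempty) {l m : ℝ} (hl : 0 < l) (hm : 0 < m)
    (hS : ∀ a ∈ K, ∀ b ∈ J, l * a + m * b ∈ S) :
    ENNReal.ofReal l * volume K + ENNReal.ofReal m * volume J ≤ volume S := by
  have ha := hK.sSup_mem hK0
  have hb := hJ.sInf_mem hJ0
  set a := sSup K
  set b := sInf J
  have hP1 : IsCompact ((fun x => l * x + m * b) '' K) := hK.image (by fun_prop)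
  have hP2 : IsCompact ((fun x => m * x + l * a) '' J) := hJ.image (by fun_prop)
  rw [← lc_image_vol l (m * b) hl, ← lc_image_vol m (l * a) hm, ← measure_union₀]
  · apply measure_mono
    rintro x (⟨y, hy, rfl⟩ | ⟨y, hy, rfl⟩)
    · exact hS y hy b hb
    · have := hS a ha y hy
      simpa [add_comm] using this
  · exact hP2.isClosed.measurableSet.nullMeasurableSet
  · refine measure_mono_null (t := {l * a + m * b}) ?_ (by simp)
    rintro x ⟨⟨y, hy, rfl⟩, ⟨z, hz, hzy⟩⟩
    simp only at hzy ⊢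
    have h1 : y ≤ a := le_csSup hK.bddAbove hy
    have h2 : b ≤ z := csInf_le hJ.bddBelow hz
    have : y = a := by nlinarith
    simp [this]

lemma vol_le_iSup_compact {A : Set ℝ} (hA : MeasurableSet A) :
    volume A = ⨆ K : {K : Set ℝ // K ⊆ A ∧ IsCompact K}, volume K.1 := by
  apply le_antisymm
  · rw [hA.measure_eq_iSup_isCompact]
    refine iSup_le fun K => iSup_le fun h1 => iSup_le fun h2 => ?_
    exact le_iSup (fun K : {K : Set ℝ // K ⊆ A ∧ IsCompact K} => volume K.1) ⟨K, h1, h2⟩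
  · exact iSup_le fun K => measure_mono K.2.1

lemma bm1 {A B S : Set ℝ} (hA : MeasurableSet A) (hB : MeasurableSet B) (hA0 : A.Nonempty)
    (hB0 : B.Nonempty) {l m : ℝ} (hl : 0 < l) (hm : 0 < m)
    (hS : ∀ a ∈ A, ∀ b ∈ B, l * a + m * b ∈ S) :
    ENNReal.ofReal l * volume A + ENNReal.ofReal m * volume B ≤ volume S := by
  rw [vol_le_iSup_compact hA, vol_le_iSup_compact hB, ENNReal.mul_iSup, ENNReal.mul_iSup]
  have : Nonempty {K : Set ℝ // K ⊆ A ∧ IsCompact K} := ⟨⟨∅, by simp, isCompact_empty⟩⟩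
  have : Nonempty {K : Set ℝ // K ⊆ B ∧ IsCompact K} := ⟨⟨∅, by simp, isCompact_empty⟩⟩
  obtain ⟨a, ha⟩ := hA0
  obtain ⟨b, hb⟩ := hB0
  refine ENNReal.iSup_add_iSup_le fun K J => ?_
  have := bm_compact (K := insert a K.1) (J := insert b J.1) (S := S) (K.2.2.insert a)
    (J.2.2.insert b) ⟨a, by simp⟩ ⟨b, by simp⟩ hl hm ?_
  · refine le_trans ?_ this
    gcongr <;> simp
  · intro x hx y hy
    exact hS x (Set.insert_subset ha K.2.1 hx) y (Set.insert_subset hb J.2.1 hy)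

lemma layer_one {F : ℝ → ENNReal} (hF : Measurable F) (h1 : ∀ x, F x ≤ 1) :
    ∫⁻ x, F x = ∫⁻ t in Set.Ioi (0:ℝ), volume {x | ENNReal.ofReal t < F x} := by
  have hfin : ∀ x, F x ≠ ⊤ := fun x => ne_top_of_le_ne_top ENNReal.one_ne_top (h1 x)
  have h := lintegral_eq_lintegral_meas_lt (f := fun x => (F x).toReal) volume
    (Filter.Eventually.of_forall fun x => ENNReal.toReal_nonneg) (hF.ennreal_toReal.aemeasurable)
  simp only [ENNReal.ofReal_toReal (hfin _)] at h
  rw [h]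
  refine setLIntegral_congr_fun measurableSet_Ioi fun t ht => ?_
  simp only [ENNReal.ofReal_lt_iff_lt_toReal (le_of_lt ht) (hfin _)]

lemma pl_norm {f g h : ℝ → ENNReal} (hf : Measurable f) (hg : Measurable g) (hh : Measurable h)
    {l m : ℝ} (hl : 0 < l) (hm : 0 < m) (hlm : l + m = 1) (f1 : ⨆ x, f x = 1) (g1 : ⨆ x, g x = 1)
    (H : ∀ x y, f x ^ l * g y ^ m ≤ h (l * x + m * y)) :
    ENNReal.ofReal l * (∫⁻ x, f x) + ENNReal.ofReal m * (∫⁻ x, g x) ≤ ∫⁻ x, h x := by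
  have hf1 : ∀ x, f x ≤ 1 := fun x => f1 ▸ le_iSup f x
  have hg1 : ∀ x, g x ≤ 1 := fun x => g1 ▸ le_iSup g x
  have key : ∫⁻ x, min (h x) 1 ≤ ∫⁻ x, h x := lintegral_mono fun x => min_le_left _ _
  refine le_trans ?_ key
  rw [layer_one hf hf1, layer_one hg hg1,
    layer_one (hh.min measurable_const) (fun x => min_le_right _ _),
    ← lintegral_const_mul' _ _ ENNReal.ofReal_ne_top, ← lintegral_const_mul' _ _ ENNReal.ofReal_ne_top]
  refine le_trans (le_lintegral_add _ _) ?_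
  refine setLIntegral_mono' measurableSet_Ioi fun t ht => ?_
  rcases lt_or_ge t 1 with h1 | h1
  · have ht1 : ENNReal.ofReal t < 1 := by
      rw [← ENNReal.ofReal_one]; exact (ENNReal.ofReal_lt_ofReal_iff one_pos).2 h1
    apply bm1 (measurableSet_lt measurable_const hf) (measurableSet_lt measurable_const hg) _ _ hl hm
    · intro a ha b hb
      simp only [Set.mem_ofPred_eq, lt_min_iff] at ha hb ⊢
      refine ⟨lt_of_lt_of_le ?_ (H a b), ht1⟩
      have e : ENNReal.ofReal t = ENNReal.ofReal t ^ l * ENNReal.ofReal t ^ m := by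
        rw [← ENNReal.rpow_add_of_nonneg _ _ hl.le hm.le, hlm, ENNReal.rpow_one]
      rw [e]
      exact ENNReal.mul_lt_mul (ENNReal.rpow_lt_rpow ha hl) (ENNReal.rpow_lt_rpow hb hm)
    · rw [← f1] at ht1; exact lt_iSup_iff.1 ht1
    · rw [← g1] at ht1; exact lt_iSup_iff.1 ht1
  · have e1 : {x | ENNReal.ofReal t < f x} = ∅ := by
      ext x; simpa using (hf1 x).trans (by simpa using h1)
    have e2 : {x | ENNReal.ofReal t < g x} = ∅ := by
      ext x; simpa using (hg1 x).trans (by simpa using h1)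
    rw [e1, e2]; simp

lemma amgm_enn {l m : ℝ} (hl : 0 < l) (hm : 0 < m) (hlm : l + m = 1) (x y : ENNReal) :
    x ^ l * y ^ m ≤ ENNReal.ofReal l * x + ENNReal.ofReal m * y := by
  have hc : Real.HolderConjugate (l⁻¹) (m⁻¹) := by
    rw [Real.holderConjugate_iff]
    constructor
    · exact (one_lt_inv₀ hl).2 (by linarith)
    · simpa using hlm
  have := ENNReal.young_inequality (x ^ l) (y ^ m) hc
  rw [← ENNReal.rpow_mul, ← ENNReal.rpow_mul, mul_inv_cancel₀ hl.ne', mul_inv_cancel₀ hm.ne',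
    ENNReal.rpow_one, ENNReal.rpow_one, ENNReal.ofReal_inv_of_pos hl, ENNReal.ofReal_inv_of_pos hm,
    div_eq_mul_inv, div_eq_mul_inv, inv_inv, inv_inv] at this
  simpa [mul_comm] using this

lemma pl_bdd {f g h : ℝ → ENNReal} (hf : Measurable f) (hg : Measurable g) (hh : Measurable h)
    {l m : ℝ} (hl : 0 < l) (hm : 0 < m) (hlm : l + m = 1) (f1 : ⨆ x, f x ≠ ⊤) (g1 : ⨆ x, g x ≠ ⊤)
    (H : ∀ x y, f x ^ l * g y ^ m ≤ h (l * x + m * y)) :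
    (∫⁻ x, f x) ^ l * (∫⁻ x, g x) ^ m ≤ ∫⁻ x, h x := by
  by_cases f0 : ⨆ x, f x = 0
  · have : ∀ x, f x = 0 := by simpa using f0
    simp [this, ENNReal.zero_rpow_of_pos hl]
  by_cases g0 : ⨆ x, g x = 0
  · have : ∀ x, g x = 0 := by simpa using g0
    simp [this, ENNReal.zero_rpow_of_pos hm]
  set a := ⨆ x, f x with ha
  set b := ⨆ x, g x with hb
  have ab0 : a ^ l * b ^ m ≠ 0 := by
    simp [ENNReal.rpow_eq_zero_iff, f0, g0, f1, g1]
  have abt : a ^ l * b ^ m ≠ ⊤ := by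
    apply ENNReal.mul_ne_top <;> apply ENNReal.rpow_ne_top_of_nonneg <;> first | positivity | assumption
  have := pl_norm (f := fun x => f x / a) (g := fun x => g x / b)
    (h := fun x => h x / (a ^ l * b ^ m)) (hf.div_const _) (hg.div_const _) (hh.div_const _)
    hl hm hlm ?_ ?_ ?_
  · have h2 := le_trans (amgm_enn hl hm hlm (∫⁻ x, f x / a) (∫⁻ x, g x / b)) this
    simp only [div_eq_mul_inv] at h2
    rw [lintegral_mul_const _ hf, lintegral_mul_const _ hg, lintegral_mul_const _ hh,
      ENNReal.mul_rpow_of_nonneg _ _ hl.le, ENNReal.mul_rpow_of_nonneg _ _ hm.le,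
      ENNReal.inv_rpow, ENNReal.inv_rpow, mul_mul_mul_comm, ← ENNReal.mul_inv, 
      ← div_eq_mul_inv, ← div_eq_mul_inv, ENNReal.div_le_iff ab0 abt,
      ENNReal.div_mul_cancel ab0 abt] at h2
    · exact h2
    · right; exact ENNReal.rpow_ne_top_of_nonneg hm.le g1
    · left; exact ENNReal.rpow_ne_top_of_nonneg hl.le f1
  · rw [← ENNReal.iSup_div, ← ha, ENNReal.div_self f0 f1]
  · rw [← ENNReal.iSup_div, ← hb, ENNReal.div_self g0 g1]
  · intro x y
    rw [ENNReal.div_rpow_of_nonneg _ _ hl.le, ENNReal.div_rpow_of_nonneg _ _ hm.le]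
    refine le_trans (le_of_eq ?_) (ENNReal.div_le_div_right (H x y) _)
    rw [div_eq_mul_inv, div_eq_mul_inv, div_eq_mul_inv, mul_mul_mul_comm, ← ENNReal.mul_inv]
    · right; exact ENNReal.rpow_ne_top_of_nonneg hm.le g1
    · left; exact ENNReal.rpow_ne_top_of_nonneg hl.le f1

lemma lint_trunc {f : ℝ → ENNReal} (hf : Measurable f) :
    ∫⁻ x, f x = ⨆ n : ℕ, ∫⁻ x, min (f x) n := by
  rw [← lintegral_iSup (fun n => hf.min measurable_const)]
  · congr 1; ext x
    have h : f x = min (f x) (⨆ n : ℕ, (n : ENNReal)) := by rw [ENNReal.iSup_natCast]; simp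
    conv_lhs => rw [h]
    exact inf_iSup_eq _ _
  · intro i j hij x
    exact min_le_min le_rfl (by exact_mod_cast hij)

lemma pl_one {f g h : ℝ → ENNReal} (hf : Measurable f) (hg : Measurable g) (hh : Measurable h)
    {l m : ℝ} (hl : 0 < l) (hm : 0 < m) (hlm : l + m = 1)
    (H : ∀ x y, f x ^ l * g y ^ m ≤ h (l * x + m * y)) :
    (∫⁻ x, f x) ^ l * (∫⁻ x, g x) ^ m ≤ ∫⁻ x, h x := by
  have e : ∀ (l : ℝ) (hl : 0 < l) (u : ℕ → ENNReal), (⨆ n, u n) ^ l = ⨆ n, u n ^ l :=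
    fun l hl u => (ENNReal.orderIsoRpow l hl).map_iSup u
  rw [lint_trunc hf, lint_trunc hg, e l hl, e m hm, ENNReal.iSup_mul]
  refine iSup_le fun n => ?_
  rw [ENNReal.mul_iSup]
  refine iSup_le fun k => ?_
  refine pl_bdd (hf.min measurable_const) (hg.min measurable_const) hh hl hm hlm ?_ ?_ ?_
  · exact ne_top_of_le_ne_top (ENNReal.natCast_ne_top n) (iSup_le fun x => min_le_right _ _)
  · exact ne_top_of_le_ne_top (ENNReal.natCast_ne_top k) (iSup_le fun x => min_le_right _ _)
  · intro x y
    refine le_trans ?_ (H x y)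
    gcongr <;> exact min_le_left _ _

lemma pl_pi : ∀ (n : ℕ) {f g h : (Fin n → ℝ) → ENNReal}, Measurable f → Measurable g →
    Measurable h → ∀ {l m : ℝ}, 0 < l → 0 < m → l + m = 1 →
    (∀ x y, f x ^ l * g y ^ m ≤ h (l • x + m • y)) →
    (∫⁻ x, f x) ^ l * (∫⁻ x, g x) ^ m ≤ ∫⁻ x, h x := by
  intro n
  induction n with
  | zero =>
    intro f g h hf hg hh l m hl hm hlm H
    simp only [Measure.volume_pi_eq_dirac (0 : Fin 0 → ℝ), lintegral_dirac]
    simpa using H 0 0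
  | succ n ih =>
    intro f g h hf hg hh l m hl hm hlm H
    have mp := (volume_preserving_piFinSuccAbove (fun _ : Fin (n+1) => ℝ) 0).symm
    set Φ := (MeasurableEquiv.piFinSuccAbove (fun _ : Fin (n+1) => ℝ) 0).symm with hΦ
    have hΦa : ∀ x y : ℝ × (Fin n → ℝ), Φ (l • x + m • y) = l • Φ x + m • Φ y := by
      intro x y
      ext i
      refine Fin.cases ?_ (fun j => ?_) i <;>
      simp [hΦ, MeasurableEquiv.piFinSuccAbove]
    have conv : ∀ F : (Fin (n+1) → ℝ) → ENNReal, Measurable F →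
        ∫⁻ x, F x = ∫⁻ s, ∫⁻ z, F (Φ (s, z)) := by
      intro F hF
      rw [← mp.lintegral_comp hF]
      exact lintegral_prod _ (hF.comp Φ.measurable).aemeasurable
    have meas : ∀ F : (Fin (n+1) → ℝ) → ENNReal, Measurable F →
        Measurable fun s => ∫⁻ z, F (Φ (s, z)) := by
      intro F hF
      exact (hF.comp Φ.measurable).lintegral_prod_right'
    rw [conv f hf, conv g hg, conv h hh]
    refine pl_one (meas f hf) (meas g hg) (meas h hh) hl hm hlm ?_
    intro s t
    refine ih (hf.comp (Φ.measurable.comp measurable_prodMk_left))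
      (hg.comp (Φ.measurable.comp measurable_prodMk_left))
      (hh.comp (Φ.measurable.comp measurable_prodMk_left)) hl hm hlm ?_
    intro x y
    have := H (Φ (s, x)) (Φ (t, y))
    rw [← hΦa] at this
    simpa using this

/-- log-concavity of an extended nonnegative function -/
def LCE {E : Type*} [AddCommMonoid E] [Module ℝ E] (q : E → ENNReal) : Prop :=
  ∀ x y : E, ∀ l m : ℝ, 0 < l → 0 < m → l + m = 1 → q x ^ l * q y ^ m ≤ q (l • x + m • y)

lemma reg_density {d : ℕ} (p : (Fin d → ℝ) → ℝ) (hp0 : ∀ x, 0 ≤ p x) (hp : IsLogConcaveFn p) :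
    ∃ q : (Fin d → ℝ) → ENNReal, Measurable q ∧ LCE q ∧
      (fun x => ENNReal.ofReal (p x)) =ᵐ[volume] q := by
  classical
  set K : Set (Fin d → ℝ) := {x | 0 < p x} with hK
  have key : ∀ x y : Fin d → ℝ, ∀ a b : ℝ, 0 ≤ a → 0 ≤ b → a + b = 1 →
      p x ^ a * p y ^ b ≤ p (a • x + b • y) := by
    intro x y a b ha hb hab
    have := hp x y a ha (by linarith)
    rwa [show 1 - a = b by linarith] at this
  have hconv : Convex ℝ K := by
    intro x hx y hy a b ha hb hab
    have hx' : 0 < p x := hx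
    have hy' : 0 < p y := hy
    exact lt_of_lt_of_le (by positivity) (key x y a b ha hb hab)
  have hconc : ConcaveOn ℝ K (fun x => Real.log (p x)) := by
    refine ⟨hconv, fun x hx y hy a b ha hb hab => ?_⟩
    have hx' : 0 < p x := hx
    have hy' : 0 < p y := hy
    have h1 := Real.log_le_log (by positivity) (key x y a b ha hb hab)
    rwa [Real.log_mul (by positivity) (by positivity), Real.log_rpow hx', Real.log_rpow hy'] at h1
  have hcont : ContinuousOn (fun x => ENNReal.ofReal (p x)) (interior K) := by
    refine ENNReal.continuous_ofReal.comp_continuousOn ?_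
    refine (Real.continuous_exp.comp_continuousOn hconc.continuousOn_interior).congr ?_
    intro x hx
    have hxK : x ∈ K := interior_subset hx
    exact (Real.exp_log hxK).symm
  refine ⟨(interior K).piecewise (fun x => ENNReal.ofReal (p x)) (fun _ => 0), ?_, ?_, ?_⟩
  · exact hcont.measurable_piecewise continuousOn_const isOpen_interior.measurableSet
  · intro x y l m hl hm hlm
    by_cases hx : x ∈ interior K
    · by_cases hy : y ∈ interior K
      · have hz : l • x + m • y ∈ interior K := hconv.interior hx hy hl.le hm.le hlm
        simp only [Set.piecewise_eq_of_mem _ _ _ hx, Set.piecewise_eq_of_mem _ _ _ hy,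
          Set.piecewise_eq_of_mem _ _ _ hz]
        rw [ENNReal.ofReal_rpow_of_nonneg (hp0 x) hl.le, ENNReal.ofReal_rpow_of_nonneg (hp0 y) hm.le,
          ← ENNReal.ofReal_mul (Real.rpow_nonneg (hp0 x) _)]
        exact ENNReal.ofReal_le_ofReal (key x y l m hl.le hm.le hlm)
      · simp [Set.piecewise_eq_of_notMem _ _ _ hy, ENNReal.zero_rpow_of_pos hm]
    · simp [Set.piecewise_eq_of_notMem _ _ _ hx, ENNReal.zero_rpow_of_pos hl]
  · have hnull : volume (frontier K) = 0 := hconv.addHaar_frontier volume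
    have : ∀ᵐ x ∂(volume : Measure (Fin d → ℝ)), x ∉ frontier K := by
      rw [ae_iff]; simpa using hnull
    filter_upwards [this] with x hx
    by_cases hx2 : x ∈ interior K
    · simp [Set.piecewise_eq_of_mem _ _ _ hx2]
    · rw [Set.piecewise_eq_of_notMem _ _ _ hx2]
      have : x ∉ K := by
        intro h
        exact hx ⟨subset_closure h, hx2⟩
      have h0 : p x ≤ 0 := not_lt.1 this
      simpa using h0

lemma borell {d : ℕ} {q : (Fin d → ℝ) → ENNReal} (hq : Measurable q) (hlc : LCE q)
    (a : Fin d → ℝ) (R : ℝ) :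
    (∫⁻ x in {x | 3 * R < |a ⬝ᵥ x|}, q x) * (∫⁻ x in {x | |a ⬝ᵥ x| ≤ R}, q x)
      ≤ (∫⁻ x in {x | R < |a ⬝ᵥ x|}, q x) ^ 2 := by
  have hm : Measurable fun x : Fin d → ℝ => |a ⬝ᵥ x| := by
    have : Continuous fun x : Fin d → ℝ => |a ⬝ᵥ x| := by
      unfold dotProduct; fun_prop
    exact this.measurable
  have m1 : MeasurableSet {x : Fin d → ℝ | 3 * R < |a ⬝ᵥ x|} := measurableSet_lt measurable_const hm
  have m2 : MeasurableSet {x : Fin d → ℝ | |a ⬝ᵥ x| ≤ R} := measurableSet_le hm measurable_const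
  have m3 : MeasurableSet {x : Fin d → ℝ | R < |a ⬝ᵥ x|} := measurableSet_lt measurable_const hm
  have := pl_pi d (hq.indicator m1) (hq.indicator m2) (hq.indicator m3)
    (l := 1/2) (m := 1/2) (by norm_num) (by norm_num) (by norm_num) ?_
  · rw [lintegral_indicator m1, lintegral_indicator m2, lintegral_indicator m3] at this
    have h2 := pow_le_pow_left' this 2
    rw [mul_pow, ← ENNReal.rpow_natCast, ← ENNReal.rpow_natCast, ← ENNReal.rpow_mul,
      ← ENNReal.rpow_mul] at h2
    simpa using h2
  · intro x y
    by_cases hx : x ∈ {x : Fin d → ℝ | 3 * R < |a ⬝ᵥ x|}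
    · by_cases hy : y ∈ {x : Fin d → ℝ | |a ⬝ᵥ x| ≤ R}
      · have hz : (1/2 : ℝ) • x + (1/2 : ℝ) • y ∈ {x : Fin d → ℝ | R < |a ⬝ᵥ x|} := by
          simp only [Set.mem_ofPred_eq, dotProduct_add, dotProduct_smul, smul_eq_mul] at hx hy ⊢
          have h1 : |a ⬝ᵥ x| ≤ |a ⬝ᵥ x + a ⬝ᵥ y| + |a ⬝ᵥ y| := by
            have := abs_sub (a ⬝ᵥ x + a ⬝ᵥ y) (a ⬝ᵥ y)
            simpa using this
          rw [← mul_add, abs_mul, abs_of_pos (by norm_num : (0:ℝ) < 1/2)]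
          linarith
        rw [Set.indicator_of_mem hx, Set.indicator_of_mem hy, Set.indicator_of_mem hz]
        exact hlc x y _ _ (by norm_num) (by norm_num) (by norm_num)
      · rw [Set.indicator_of_notMem hy]; simp
    · rw [Set.indicator_of_notMem hx]; simp

/-- third moment bound -/
lemma third_moment (C : ℝ) (hC : 0 < C) : ∃ K : ℝ, 0 < K ∧
    ∀ (Ω : Type) (_ : MeasurableSpace Ω) (ν : Measure Ω), IsProbabilityMeasure ν →
    ∀ Y : Ω → ℝ, Measurable Y → Integrable (fun x => Y x ^ 2) ν → ∫ x, Y x ^ 2 ∂ν ≤ C →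
    (∀ R : ℝ, ν {x | 3 * R < |Y x|} * ν {x | |Y x| ≤ R} ≤ ν {x | R < |Y x|} ^ 2) →
    ∫⁻ x, ENNReal.ofReal (|Y x| ^ 3) ∂ν ≤ ENNReal.ofReal K := by
  set T2 : ℝ := 18 * C with hT2
  set A : ℝ := T2 * (1 + T2) + 162 * C ^ 2 * (1 + 1 / T2) with hA
  have hApos : 0 < A := by positivity
  refine ⟨3 * (A * Real.pi), by positivity, ?_⟩
  intro Ω _ ν _ Y hY hI hV hB
  have hcheb : ∀ t : ℝ, 0 < t → ν.real {x | t < |Y x|} ≤ C / t ^ 2 := by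
    intro t ht
    have h1 := mul_meas_ge_le_integral_of_nonneg (μ := ν) (f := fun x => Y x ^ 2)
      (Filter.Eventually.of_forall fun x => sq_nonneg _) hI (t ^ 2)
    have h2 : ν.real {x | t < |Y x|} ≤ ν.real {x | t ^ 2 ≤ Y x ^ 2} := by
      apply measureReal_mono _ (measure_ne_top _ _)
      intro x hx
      have hx' : t < |Y x| := hx
      show t ^ 2 ≤ Y x ^ 2
      rw [← sq_abs (Y x)]; gcongr
    rw [le_div_iff₀ (by positivity)]
    nlinarith [sq_nonneg t, mul_le_mul_of_nonneg_left h2 (sq_nonneg t)]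
  have hBr : ∀ R : ℝ, ν.real {x | 3 * R < |Y x|} * ν.real {x | |Y x| ≤ R}
      ≤ ν.real {x | R < |Y x|} ^ 2 := by
    intro R
    have := ENNReal.toReal_mono (by simp) (hB R)
    simpa [Measure.real] using this
  have hcompl : ∀ R : ℝ, ν.real {x | |Y x| ≤ R} = 1 - ν.real {x | R < |Y x|} := by
    intro R
    have hms : MeasurableSet {x | R < |Y x|} := measurableSet_lt measurable_const hY.abs
    rw [← probReal_compl_eq_one_sub hms]
    congr 1; ext x; simp
  have hq : ∀ t : ℝ, 0 < t → ν.real {x | t < |Y x|} * t ^ 2 ≤ A * (1 + t ^ 2)⁻¹ := by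
    intro t ht
    have hT2pos : 0 < T2 := by positivity
    rw [← div_eq_mul_inv, le_div_iff₀ (by positivity)]
    have hle1 : ν.real {x | t < |Y x|} ≤ 1 := measureReal_le_one
    have h0 : 0 ≤ ν.real {x | t < |Y x|} := measureReal_nonneg
    rcases le_or_gt (t ^ 2) T2 with h | h
    · have : ν.real {x | t < |Y x|} * t ^ 2 * (1 + t ^ 2) ≤ 1 * T2 * (1 + T2) := by gcongr
      have h3 : 0 ≤ 162 * C ^ 2 * (1 + 1 / T2) := by positivity
      rw [hA]; linarith
    · have hR : 0 < t / 3 := by positivity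
      have h1 := hcheb (t / 3) hR
      have h2 := hBr (t / 3)
      rw [hcompl, show 3 * (t / 3) = t by ring] at h2
      set z := ν.real {x | t / 3 < |Y x|}
      set w := ν.real {x | t < |Y x|}
      have hz0 : 0 ≤ z := measureReal_nonneg
      have e : C / (t / 3) ^ 2 = 9 * C / t ^ 2 := by field_simp; ring
      rw [e] at h1
      have hzh : z ≤ 1 / 2 := by
        refine h1.trans ?_
        rw [div_le_iff₀ (by positivity)]; rw [hT2] at h; linarith
      have hw : w ≤ 2 * (9 * C / t ^ 2) ^ 2 := by
        have : z ^ 2 ≤ (9 * C / t ^ 2) ^ 2 := by gcongr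
        nlinarith
      have h5 : w * t ^ 2 * (1 + t ^ 2) ≤ 2 * (9 * C / t ^ 2) ^ 2 * t ^ 2 * (1 + t ^ 2) := by gcongr
      have h6 : 2 * (9 * C / t ^ 2) ^ 2 * t ^ 2 * (1 + t ^ 2) = 162 * C ^ 2 * (1 + 1 / t ^ 2) := by
        field_simp; ring
      have h7 : 162 * C ^ 2 * (1 + 1 / t ^ 2) ≤ 162 * C ^ 2 * (1 + 1 / T2) := by gcongr
      have h8 : 0 ≤ T2 * (1 + T2) := by positivity
      rw [hA]; linarith
  have hl := lintegral_rpow_eq_lintegral_meas_lt_mul ν (f := fun x => |Y x|)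
    (Filter.Eventually.of_forall fun x => abs_nonneg _) hY.abs.aemeasurable (p := 3) (by norm_num)
  have e3 : ∀ x, |Y x| ^ (3 : ℝ) = |Y x| ^ 3 := fun x => by exact_mod_cast Real.rpow_natCast _ 3
  simp only [e3] at hl
  rw [hl, ENNReal.ofReal_mul (by norm_num)]
  gcongr
  calc ∫⁻ t in Set.Ioi (0:ℝ), ν {a | t < |Y a|} * ENNReal.ofReal (t ^ ((3:ℝ) - 1))
      ≤ ∫⁻ t in Set.Ioi (0:ℝ), ENNReal.ofReal (A * (1 + t ^ 2)⁻¹) := by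
        refine setLIntegral_mono' measurableSet_Ioi fun t ht => ?_
        have e2 : t ^ ((3:ℝ) - 1) = t ^ 2 := by
          rw [show (3:ℝ) - 1 = (2:ℕ) by norm_num, Real.rpow_natCast]
        rw [e2, ← ofReal_measureReal (measure_ne_top _ _),
          ← ENNReal.ofReal_mul measureReal_nonneg]
        exact ENNReal.ofReal_le_ofReal (hq t ht)
    _ ≤ ∫⁻ t : ℝ, ENNReal.ofReal (A * (1 + t ^ 2)⁻¹) := setLIntegral_le_lintegral _ _
    _ = ENNReal.ofReal (A * Real.pi) := by
        rw [← ofReal_integral_eq_lintegral_ofReal (integrable_inv_one_add_sq.const_mul A)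
          (Filter.Eventually.of_forall fun t => by positivity), integral_const_mul,
          integral_univ_inv_one_add_sq]

lemma halfspace_mass (C : ℝ) (hC : 0 < C) : ∃ κ r c : ℝ, 0 < κ ∧ 0 < r ∧ 0 < c ∧
    ∀ (Ω : Type) (_ : MeasurableSpace Ω) (ν : Measure Ω), IsProbabilityMeasure ν →
    ∀ Y : Ω → ℝ, Measurable Y → Integrable (fun x => Y x ^ 2) ν → ∫ x, Y x ^ 2 ∂ν ≤ C →
    C⁻¹ ≤ ∫ x, Y x ^ 2 ∂ν → ∫ x, Y x ∂ν = 0 →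
    (∀ R : ℝ, ν {x | 3 * R < |Y x|} * ν {x | |Y x| ≤ R} ≤ ν {x | R < |Y x|} ^ 2) →
    κ ≤ ∫ x, |Y x| ∂ν ∧ ENNReal.ofReal c ≤ ν {x | r ≤ Y x} := by
  obtain ⟨K, hK, H⟩ := third_moment C hC
  set κ : ℝ := 1 / (4 * C ^ 2 * K) with hκ
  have hκ0 : 0 < κ := by positivity
  refine ⟨κ, κ / 8, κ ^ 2 / (8 * C), hκ0, by positivity, by positivity, ?_⟩
  intro Ω _ ν _ Y hY hI hV hV' hE hB
  have h3 := H Ω _ ν inferInstance Y hY hI hV hB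
  have hI3 : Integrable (fun x => |Y x| ^ 3) ν := by
    refine ⟨(hY.abs.pow_const 3).aestronglyMeasurable, ?_⟩
    rw [hasFiniteIntegral_iff_ofReal (Filter.Eventually.of_forall fun x => by positivity)]
    exact lt_of_le_of_lt h3 ENNReal.ofReal_lt_top
  have h3' : ∫ x, |Y x| ^ 3 ∂ν ≤ K := by
    rw [← ofReal_integral_eq_lintegral_ofReal hI3
      (Filter.Eventually.of_forall fun x => by positivity)] at h3
    exact (ENNReal.ofReal_le_ofReal_iff hK.le).1 h3
  have hL2 : MemLp Y 2 ν := (memLp_two_iff_integrable_sq hY.aestronglyMeasurable).2 hI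
  have hI1 : Integrable Y ν := hL2.integrable (by norm_num)
  have hκle : κ ≤ ∫ x, |Y x| ∂ν := by
    set R : ℝ := 2 * C * K with hR
    have hR0 : 0 < R := by positivity
    have hpt : ∀ x, Y x ^ 2 ≤ R * |Y x| + R⁻¹ * |Y x| ^ 3 := by
      intro x
      rw [← sq_abs (Y x)]
      have ha := abs_nonneg (Y x)
      set y := |Y x|
      have : R⁻¹ * y ^ 3 = y * (R⁻¹ * y ^ 2) := by ring
      have h5 : 0 ≤ y * (R⁻¹ * ((y - R) ^ 2 + R * y)) := by positivity
      have h6 : y * (R⁻¹ * ((y - R) ^ 2 + R * y)) = R * y + R⁻¹ * y ^ 3 - y ^ 2 := by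
        field_simp; ring
      linarith
    have hIntg : ∫ x, Y x ^ 2 ∂ν ≤ R * ∫ x, |Y x| ∂ν + R⁻¹ * ∫ x, |Y x| ^ 3 ∂ν := by
      rw [← integral_const_mul, ← integral_const_mul,
        ← integral_add (hI1.abs.const_mul _) (hI3.const_mul _)]
      exact integral_mono hI ((hI1.abs.const_mul _).add (hI3.const_mul _)) hpt
    have h7 : R⁻¹ * ∫ x, |Y x| ^ 3 ∂ν ≤ R⁻¹ * K := by gcongr
    have h8 : R⁻¹ * K = C⁻¹ / 2 := by rw [hR]; field_simp
    have h9 : R * κ = C⁻¹ / 2 := by rw [hR, hκ]; field_simp; ring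
    have h10 : R * κ ≤ R * ∫ x, |Y x| ∂ν := by linarith
    exact le_of_mul_le_mul_left h10 hR0
  refine ⟨hκle, ?_⟩
  have hms : MeasurableSet {x | κ / 8 ≤ Y x} := measurableSet_le measurable_const hY
  have hpt : ∀ x, (|Y x| + Y x) / 2 ≤ κ / 8 + κ / (8 * C) * Y x ^ 2
      + (2 * C / κ) * Set.indicator {x | κ / 8 ≤ Y x} (fun _ => (1:ℝ)) x := by
    intro x
    by_cases hx : κ / 8 ≤ Y x
    · rw [Set.indicator_of_mem (show x ∈ {x | κ / 8 ≤ Y x} from hx),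
        abs_of_nonneg (by linarith)]
      have h1 : 0 ≤ κ / (8 * C) * (Y x - 4 * C / κ) ^ 2 := by positivity
      have h2 : κ / (8 * C) * (Y x - 4 * C / κ) ^ 2
        = κ / (8 * C) * Y x ^ 2 - Y x + 2 * C / κ := by field_simp; ring
      linarith
    · rw [Set.indicator_of_notMem (show x ∉ {x | κ / 8 ≤ Y x} from hx)]
      push Not at hx
      have h1 : 0 ≤ κ / (8 * C) * Y x ^ 2 := by positivity
      rcases abs_cases (Y x) with h | h <;> linarith
  have hii : Integrable (Set.indicator {x | κ / 8 ≤ Y x} (fun _ => (1:ℝ))) ν :=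
    (integrable_const 1).indicator hms
  have hia : Integrable (fun x => κ / 8 + κ / (8 * C) * Y x ^ 2) ν :=
    (integrable_const _).add (hI.const_mul _)
  have hIntg : ∫ x, (|Y x| + Y x) / 2 ∂ν ≤ κ / 8 + κ / (8 * C) * ∫ x, Y x ^ 2 ∂ν
      + (2 * C / κ) * ν.real {x | κ / 8 ≤ Y x} := by
    refine (integral_mono ((hI1.abs.add hI1).div_const 2)
      (hia.add (hii.const_mul _)) hpt).trans (le_of_eq ?_)
    simp only [Pi.add_apply]
    rw [integral_add hia (hii.const_mul _),
      integral_add (integrable_const _) (hI.const_mul _), integral_const_mul, integral_const_mul,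
      integral_indicator hms]
    simp
  rw [integral_div, integral_add hI1.abs hI1, hE] at hIntg
  have h1 : κ / (8 * C) * ∫ x, Y x ^ 2 ∂ν ≤ κ / (8 * C) * C := by gcongr
  have h2 : κ / (8 * C) * C = κ / 8 := by field_simp
  have h4 : κ / 4 ≤ (2 * C / κ) * ν.real {x | κ / 8 ≤ Y x} := by linarith
  rw [← ofReal_measureReal (measure_ne_top _ _)]
  apply ENNReal.ofReal_le_ofReal
  have h5 : κ / (2 * C) * (κ / 4) ≤ κ / (2 * C) * ((2 * C / κ) * ν.real {x | κ / 8 ≤ Y x}) := by gcongr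
  have h6 : κ / (2 * C) * ((2 * C / κ) * ν.real {x | κ / 8 ≤ Y x}) = ν.real {x | κ / 8 ≤ Y x} := by
    field_simp
  have h7 : κ / (2 * C) * (κ / 4) = κ ^ 2 / (8 * C) := by field_simp; ring
  linarith

lemma level_meets (C c r : ℝ) (hC : 0 < C) (hc : 0 < c) : ∃ m : ℝ, 0 < m ∧
    ∀ f : ℝ × ℝ → ENNReal, Measurable f →
    ∫⁻ z, ENNReal.ofReal (z.1 ^ 2) * f z ≤ ENNReal.ofReal C →
    ∫⁻ z, ENNReal.ofReal (z.2 ^ 2) * f z ≤ ENNReal.ofReal C →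
    (∀ α β : ℝ, α ^ 2 + β ^ 2 = 1 →
      ENNReal.ofReal c ≤ ∫⁻ z in {z : ℝ × ℝ | r ≤ α * z.1 + β * z.2}, f z) →
    ∀ α β : ℝ, α ^ 2 + β ^ 2 = 1 →
      volume ({z : ℝ × ℝ | r ≤ α * z.1 + β * z.2} ∩ {z | ENNReal.ofReal m ≤ f z}) ≠ 0 := by
  set R : ℝ := Real.sqrt (8 * C / c) with hR
  have hR0 : 0 < R := by rw [hR]; positivity
  have hR2 : R ^ 2 = 8 * C / c := by rw [hR]; exact Real.sq_sqrt (by positivity)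
  set m : ℝ := c / (16 * R ^ 2) with hm
  have hm0 : 0 < m := by positivity
  refine ⟨m, hm0, ?_⟩
  intro f hf h1 h2 hH α β hab h0
  set H : Set (ℝ × ℝ) := {z : ℝ × ℝ | r ≤ α * z.1 + β * z.2} with hHd
  set K : Set (ℝ × ℝ) := {z | ENNReal.ofReal m ≤ f z} with hKd
  set B : Set (ℝ × ℝ) := Set.Icc (-R) R ×ˢ Set.Icc (-R) R with hBd
  have mH : MeasurableSet H := measurableSet_le measurable_const (by fun_prop)
  have mK : MeasurableSet K := measurableSet_le measurable_const hf
  have mB : MeasurableSet B := measurableSet_Icc.prod measurableSet_Icc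
  have hvB : volume B = ENNReal.ofReal (4 * R ^ 2) := by
    rw [hBd, Measure.volume_eq_prod, Measure.prod_prod, Real.volume_Icc,
      ← ENNReal.ofReal_mul (by linarith)]
    congr 1; ring
  have hpt : ∀ z, H.indicator f z ≤ ENNReal.ofReal (1 / R ^ 2) * (ENNReal.ofReal (z.1 ^ 2) * f z
      + ENNReal.ofReal (z.2 ^ 2) * f z) + B.indicator (fun _ => ENNReal.ofReal m) z
      + (H ∩ K).indicator f z := by
    intro z
    by_cases hzH : z ∈ H
    · rw [Set.indicator_of_mem hzH]
      by_cases hzK : z ∈ K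
      · rw [Set.indicator_of_mem (show z ∈ H ∩ K from ⟨hzH, hzK⟩)]
        exact le_add_self
      · by_cases hzB : z ∈ B
        · rw [Set.indicator_of_mem hzB]
          have : f z < ENNReal.ofReal m := not_le.1 hzK
          refine this.le.trans ?_
          exact le_add_right le_add_self
        · have hbig : R ^ 2 ≤ z.1 ^ 2 + z.2 ^ 2 := by
            by_contra hcon
            push Not at hcon
            apply hzB
            have a1 : |z.1| ≤ R := abs_le_of_sq_le_sq (by nlinarith [sq_nonneg z.2]) hR0.le
            have a2 : |z.2| ≤ R := abs_le_of_sq_le_sq (by nlinarith [sq_nonneg z.1]) hR0.le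
            exact ⟨abs_le.1 a1, abs_le.1 a2⟩
          have : f z ≤ ENNReal.ofReal (1 / R ^ 2) * (ENNReal.ofReal (z.1 ^ 2) * f z
              + ENNReal.ofReal (z.2 ^ 2) * f z) := by
            rw [← add_mul, ← ENNReal.ofReal_add (sq_nonneg _) (sq_nonneg _), ← mul_assoc,
              ← ENNReal.ofReal_mul (by positivity)]
            have h1 : (1:ENNReal) ≤ ENNReal.ofReal (1 / R ^ 2 * (z.1 ^ 2 + z.2 ^ 2)) := by
              rw [ENNReal.one_le_ofReal, one_div, ← div_eq_inv_mul, le_div_iff₀ (by positivity)]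
              linarith
            calc f z = 1 * f z := (one_mul _).symm
              _ ≤ _ := by gcongr
          exact this.trans (le_add_right le_self_add)
    · rw [Set.indicator_of_notMem hzH]; exact zero_le
  have hIntg := lintegral_mono (μ := volume) hpt
  rw [lintegral_indicator mH, lintegral_add_right _ (hf.indicator (mH.inter mK)),
    lintegral_add_right _ (measurable_const.indicator mB), lintegral_indicator mB,
    lintegral_indicator (mH.inter mK), setLIntegral_const,
    lintegral_const_mul' _ _ ENNReal.ofReal_ne_top,
    lintegral_add_left (by fun_prop), setLIntegral_measure_zero _ _ h0, add_zero, hvB] at hIntg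
  have hfin : ENNReal.ofReal c ≤ ENNReal.ofReal (c / 2) := by
    refine (hH α β hab).trans (hIntg.trans ?_)
    calc _ ≤ ENNReal.ofReal (1 / R ^ 2) * (ENNReal.ofReal C + ENNReal.ofReal C)
        + ENNReal.ofReal m * ENNReal.ofReal (4 * R ^ 2) := by gcongr
      _ = ENNReal.ofReal (c / 2) := by
        rw [← ENNReal.ofReal_add hC.le hC.le, ← ENNReal.ofReal_mul (by positivity),
          ← ENNReal.ofReal_mul hm0.le, ← ENNReal.ofReal_add (by positivity) (by positivity)]
        congr 1
        rw [hm, hR2]; field_simp; ring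
  have := (ENNReal.ofReal_le_ofReal_iff (by positivity)).1 hfin
  linarith

lemma LCE.convex_level {E : Type*} [AddCommGroup E] [Module ℝ E] {f : E → ENNReal} (h : LCE f)
    (a : ENNReal) : Convex ℝ {z | a ≤ f z} := by
  rw [convex_iff_forall_pos]
  intro x hx y hy l m hl hm hlm
  have hx' : a ≤ f x := hx
  have hy' : a ≤ f y := hy
  refine le_trans ?_ (h x y l m hl hm hlm)
  calc a = a ^ l * a ^ m := by
        rw [← ENNReal.rpow_add_of_nonneg _ _ hl.le hm.le, hlm, ENNReal.rpow_one]
    _ ≤ _ := by gcongr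

lemma dens_lower (C c r : ℝ) (hC : 0 < C) (hc : 0 < c) (hr : 0 < r) : ∃ m ρ : ℝ, 0 < m ∧ 0 < ρ ∧
    ρ ≤ 1 ∧ ∀ f : ℝ × ℝ → ENNReal, Measurable f → LCE f →
    ∫⁻ z, ENNReal.ofReal (z.1 ^ 2) * f z ≤ ENNReal.ofReal C →
    ∫⁻ z, ENNReal.ofReal (z.2 ^ 2) * f z ≤ ENNReal.ofReal C →
    (∀ α β : ℝ, α ^ 2 + β ^ 2 = 1 →
      ENNReal.ofReal c ≤ ∫⁻ z in {z : ℝ × ℝ | r ≤ α * z.1 + β * z.2}, f z) →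
    ∀ z : ℝ × ℝ, |z.1| ≤ ρ → |z.2| ≤ ρ → ENNReal.ofReal m ≤ f z := by
  obtain ⟨m, hm, Hm⟩ := level_meets C c r hC hc
  refine ⟨m, min (r / 2) 1, hm, by positivity, min_le_right _ _, ?_⟩
  intro f hf hlc h1 h2 hH x hx1 hx2
  have hx1 : |x.1| ≤ r / 2 := hx1.trans (min_le_left _ _)
  have hx2 : |x.2| ≤ r / 2 := hx2.trans (min_le_left _ _)
  set K : Set (ℝ × ℝ) := {z | ENNReal.ofReal m ≤ f z} with hKd
  have hK : Convex ℝ K := hlc.convex_level _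
  have hmeet : ∀ α β : ℝ, α ^ 2 + β ^ 2 = 1 → ∃ z ∈ interior K, r ≤ α * z.1 + β * z.2 := by
    intro α β hab
    by_contra hcon
    push Not at hcon
    apply Hm f hf h1 h2 hH α β hab
    refine measure_mono_null (t := frontier K) ?_ (hK.addHaar_frontier volume)
    rintro z ⟨hz1, hz2⟩
    refine ⟨subset_closure hz2, fun hz3 => ?_⟩
    exact absurd hz1 (not_le.2 (hcon z hz3))
  have hxin : x ∈ interior K := by
    by_contra hx
    obtain ⟨φ, hφ⟩ := geometric_hahn_banach_open_point hK.interior isOpen_interior hx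
    have hφe : ∀ z : ℝ × ℝ, φ z = φ (1, 0) * z.1 + φ (0, 1) * z.2 := by
      intro z
      have : z = z.1 • ((1:ℝ), (0:ℝ)) + z.2 • ((0:ℝ), (1:ℝ)) := by ext <;> simp
      conv_lhs => rw [this]
      rw [map_add, map_smul, map_smul]; simp [mul_comm]
    set α := φ (1, 0)
    set β := φ (0, 1)
    rcases eq_or_ne (α ^ 2 + β ^ 2) 0 with h0 | h0
    · have ha : α = 0 := by nlinarith [sq_nonneg α, sq_nonneg β]
      have hb : β = 0 := by nlinarith [sq_nonneg α, sq_nonneg β]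
      obtain ⟨z, hz, _⟩ := hmeet 1 0 (by norm_num)
      have := hφ z hz
      rw [hφe z, hφe x, ha, hb] at this
      simp at this
    · have hpos : 0 < α ^ 2 + β ^ 2 := lt_of_le_of_ne (by positivity) h0.symm
      set N := Real.sqrt (α ^ 2 + β ^ 2) with hN
      have hN0 : 0 < N := Real.sqrt_pos.2 hpos
      have hN2 : N ^ 2 = α ^ 2 + β ^ 2 := Real.sq_sqrt hpos.le
      obtain ⟨z, hz, hz2⟩ := hmeet (α / N) (β / N) (by
        rw [div_pow, div_pow, ← add_div, ← hN2, div_self (by positivity)])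
      have h3 := hφ z hz
      rw [hφe z, hφe x] at h3
      have h4 : r * N ≤ α * z.1 + β * z.2 := by
        have e : α / N * z.1 + β / N * z.2 = (α * z.1 + β * z.2) / N := by ring
        rwa [e, le_div_iff₀ hN0] at hz2
      have h5 : |α| ≤ N := abs_le_of_sq_le_sq (by nlinarith [sq_nonneg β]) hN0.le
      have h6 : |β| ≤ N := abs_le_of_sq_le_sq (by nlinarith [sq_nonneg α]) hN0.le
      have h7 : α * x.1 ≤ N * (r / 2) := by
        refine (le_abs_self _).trans ?_
        rw [abs_mul]; gcongr
      have h8 : β * x.2 ≤ N * (r / 2) := by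
        refine (le_abs_self _).trans ?_
        rw [abs_mul]; gcongr
      linarith
  exact interior_subset (s := K) hxin

lemma dens_upper (C m ρ : ℝ) (hC : 0 < C) (hm : 0 < m) (hρ : 0 < ρ) (hρ1 : ρ ≤ 1) :
    ∃ M : ℝ, 0 < M ∧ ∀ f : ℝ × ℝ → ENNReal, Measurable f → LCE f →
    ∫⁻ z, f z ≤ 1 →
    ∫⁻ z, ENNReal.ofReal (z.2 ^ 2) * f z ≤ ENNReal.ofReal C →
    (∀ z : ℝ × ℝ, |z.1| ≤ ρ → |z.2| ≤ ρ → ENNReal.ofReal m ≤ f z) →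
    ∀ z : ℝ × ℝ, f z ≤ ENNReal.ofReal (M / (1 + z.2 ^ 2) ^ 2) := by
  refine ⟨(3 + 8 * C) ^ 2 / (m * ρ ^ 4), by positivity, ?_⟩
  intro f hf hlc hone h2 hlow x
  set W : Set (ℝ × ℝ) := Set.Icc (x.1 / 2 - ρ / 2) (x.1 / 2 + ρ / 2) ×ˢ
    Set.Icc (x.2 / 2 - ρ / 2) (x.2 / 2 + ρ / 2) with hW
  have mW : MeasurableSet W := measurableSet_Icc.prod measurableSet_Icc
  have hvW : volume W = ENNReal.ofReal (ρ ^ 2) := by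
    rw [hW, Measure.volume_eq_prod, Measure.prod_prod, Real.volume_Icc, Real.volume_Icc,
      ← ENNReal.ofReal_mul (by linarith)]
    congr 1; ring
  have hA : (f x ^ (1/2:ℝ) * ENNReal.ofReal m ^ (1/2:ℝ)) * ENNReal.ofReal (ρ ^ 2) ≤ ∫⁻ z in W, f z := by
    rw [← hvW, ← setLIntegral_const]
    refine setLIntegral_mono' mW fun w hw => ?_
    obtain ⟨⟨a1, a2⟩, ⟨a3, a4⟩⟩ := hw
    have h := hlc x (2 * w.1 - x.1, 2 * w.2 - x.2) (1/2) (1/2) (by norm_num) (by norm_num) (by norm_num)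
    have e : (1/2 : ℝ) • x + (1/2 : ℝ) • ((2 * w.1 - x.1, 2 * w.2 - x.2) : ℝ × ℝ) = w := by
      ext <;> simp <;> ring
    rw [e] at h
    refine le_trans ?_ h
    gcongr
    apply hlow
    · rw [abs_le]; constructor <;> simp only <;> linarith
    · rw [abs_le]; constructor <;> simp only <;> linarith
  have hB : ENNReal.ofReal (1 + x.2 ^ 2) * ∫⁻ z in W, f z ≤ ENNReal.ofReal (3 + 8 * C) := by
    rw [← lintegral_const_mul' _ _ ENNReal.ofReal_ne_top]
    calc ∫⁻ z in W, ENNReal.ofReal (1 + x.2 ^ 2) * f z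
        ≤ ∫⁻ z in W, (3 * f z + 8 * (ENNReal.ofReal (z.2 ^ 2) * f z)) := by
          refine setLIntegral_mono' mW fun w hw => ?_
          obtain ⟨⟨a1, a2⟩, ⟨a3, a4⟩⟩ := hw
          have : 1 + x.2 ^ 2 ≤ 3 + 8 * w.2 ^ 2 := by
            have h1 : (x.2 - 2 * w.2) ^ 2 ≤ 1 := by
              rw [sq_le_one_iff_abs_le_one, abs_le]; constructor <;> linarith
            nlinarith [sq_nonneg (x.2 - 4 * w.2)]
          rw [← mul_assoc, ← add_mul]
          gcongr
          refine (ENNReal.ofReal_le_ofReal this).trans (le_of_eq ?_)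
          rw [ENNReal.ofReal_add (by norm_num) (by positivity), ENNReal.ofReal_mul (by norm_num)]
          simp
      _ ≤ ∫⁻ z, (3 * f z + 8 * (ENNReal.ofReal (z.2 ^ 2) * f z)) := setLIntegral_le_lintegral _ _
      _ = 3 * (∫⁻ z, f z) + 8 * ∫⁻ z, (ENNReal.ofReal (z.2 ^ 2) * f z) := by
          rw [lintegral_add_left (by fun_prop), lintegral_const_mul' _ _ (by simp),
            lintegral_const_mul' _ _ (by simp)]
      _ ≤ 3 * 1 + 8 * ENNReal.ofReal C := by gcongr
      _ = _ := by
          rw [ENNReal.ofReal_add (by norm_num) (by positivity), ENNReal.ofReal_mul (by norm_num)]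
          simp
  have hD : (f x ^ (1/2:ℝ) * ENNReal.ofReal m ^ (1/2:ℝ)) * (ENNReal.ofReal (ρ ^ 2) *
      ENNReal.ofReal (1 + x.2 ^ 2)) ≤ ENNReal.ofReal (3 + 8 * C) := by
    rw [← mul_assoc]
    refine le_trans ?_ hB
    rw [mul_comm (ENNReal.ofReal (1 + x.2 ^ 2))]
    gcongr
  have hE := pow_le_pow_left' hD 2
  have e2 : ∀ a : ENNReal, (a ^ (1/2:ℝ)) ^ 2 = a := by
    intro a
    rw [← ENNReal.rpow_natCast, ← ENNReal.rpow_mul]; simp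
  rw [mul_pow, mul_pow, e2, e2, mul_assoc, ← ENNReal.ofReal_mul (by positivity),
    ← ENNReal.ofReal_pow (by positivity), ← ENNReal.ofReal_pow (by positivity),
    ← ENNReal.ofReal_mul (by positivity)] at hE
  rw [← ENNReal.le_div_iff_mul_le (by left; simp; positivity) (by left; simp),
    ← ENNReal.ofReal_div_of_pos (by positivity)] at hE
  refine hE.trans (le_of_eq ?_)
  congr 1
  field_simp

lemma upper_int (C M : ℝ) (hM : 0 < M) : ∃ L : ℝ, 0 < L ∧
    ∀ f : ℝ × ℝ → ENNReal, Measurable f →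
    (∀ z : ℝ × ℝ, f z ≤ ENNReal.ofReal (M / (1 + z.2 ^ 2) ^ 2)) →
    ∀ α β σ : ℝ, |β| ≤ C → 0 ≤ σ →
    ∫⁻ z, (Set.indicator {z : ℝ × ℝ | |z.1 + α| ≤ 2 * σ * |z.2 + β|}
      (fun z => ENNReal.ofReal (2 * σ * |z.2 + β|)) z) * f z ≤ ENNReal.ofReal (L * σ ^ 2) := by
  refine ⟨16 * M * (1 + C ^ 2) * Real.pi, by positivity, ?_⟩
  intro f hf hup α β σ hβ hσ
  set S : Set (ℝ × ℝ) := {z : ℝ × ℝ | |z.1 + α| ≤ 2 * σ * |z.2 + β|} with hS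
  have mS : MeasurableSet S := measurableSet_le (by fun_prop) (by fun_prop)
  have mI : Measurable (Set.indicator S (fun z : ℝ × ℝ => ENNReal.ofReal (2 * σ * |z.2 + β|))) :=
    Measurable.indicator (by fun_prop) mS
  have mD : Measurable fun z : ℝ × ℝ => ENNReal.ofReal (M / (1 + z.2 ^ 2) ^ 2) := by fun_prop
  calc _ ≤ ∫⁻ z : ℝ × ℝ, (S.indicator (fun z => ENNReal.ofReal (2 * σ * |z.2 + β|)) z)
        * ENNReal.ofReal (M / (1 + z.2 ^ 2) ^ 2) := by
        refine lintegral_mono fun z => ?_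
        gcongr
        exact hup z
    _ = ∫⁻ t : ℝ, ∫⁻ s : ℝ, (S.indicator (fun z => ENNReal.ofReal (2 * σ * |z.2 + β|)) (s, t))
        * ENNReal.ofReal (M / (1 + t ^ 2) ^ 2) := by
        rw [Measure.volume_eq_prod]
        exact lintegral_prod_symm _ (mI.mul mD).aemeasurable
    _ ≤ ∫⁻ t : ℝ, ENNReal.ofReal (16 * σ ^ 2 * M * (1 + C ^ 2) * (1 + t ^ 2)⁻¹) := by
        refine lintegral_mono fun t => ?_
        set h := 2 * σ * |t + β| with hh
        have hh0 : 0 ≤ h := by positivity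
        have e : ∀ s : ℝ, S.indicator (fun z => ENNReal.ofReal (2 * σ * |z.2 + β|)) (s, t)
            = (Set.Icc (-h - α) (h - α)).indicator (fun _ => ENNReal.ofReal h) s := by
          intro s
          by_cases hs : |s + α| ≤ h
          · rw [Set.indicator_of_mem (show (s, t) ∈ S from hs), Set.indicator_of_mem]
            rw [abs_le] at hs
            exact ⟨by linarith [hs.1], by linarith [hs.2]⟩
          · rw [Set.indicator_of_notMem (show (s, t) ∉ S from hs), Set.indicator_of_notMem]
            intro h2
            apply hs
            rw [abs_le]
            exact ⟨by linarith [h2.1], by linarith [h2.2]⟩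
        simp only [e]
        rw [lintegral_mul_const' _ _ ENNReal.ofReal_ne_top, lintegral_indicator measurableSet_Icc,
          setLIntegral_const, Real.volume_Icc, ← ENNReal.ofReal_mul hh0,
          ← ENNReal.ofReal_mul (mul_nonneg hh0 (by linarith))]
        apply ENNReal.ofReal_le_ofReal
        have h1 : h * (h - α - (-h - α)) = 8 * σ ^ 2 * (t + β) ^ 2 := by
          have : h ^ 2 = 4 * σ ^ 2 * (t + β) ^ 2 := by
            rw [hh, mul_pow, sq_abs]; ring
          linarith
        have h2 : (t + β) ^ 2 ≤ 2 * (1 + C ^ 2) * (1 + t ^ 2) := by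
          have : β ^ 2 ≤ C ^ 2 := by rw [← sq_abs β]; gcongr
          nlinarith [sq_nonneg (t - β), mul_nonneg (sq_nonneg t) (sq_nonneg C)]
        rw [h1]
        calc 8 * σ ^ 2 * (t + β) ^ 2 * (M / (1 + t ^ 2) ^ 2)
            ≤ 8 * σ ^ 2 * (2 * (1 + C ^ 2) * (1 + t ^ 2)) * (M / (1 + t ^ 2) ^ 2) := by gcongr
          _ = _ := by field_simp; ring
    _ = ENNReal.ofReal (16 * M * (1 + C ^ 2) * Real.pi * σ ^ 2) := by
        rw [← ofReal_integral_eq_lintegral_ofReal (integrable_inv_one_add_sq.const_mul _)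
          (Filter.Eventually.of_forall fun t => by positivity), integral_const_mul,
          integral_univ_inv_one_add_sq]
        congr 1; ring

lemma lower_int (m ρ ε η : ℝ) (hm : 0 < m) (hη : 0 < η) (hηε : η ≤ ε) (hε : 2 * ε ≤ ρ)
    (f : ℝ × ℝ → ENNReal)
    (hlow : ∀ z : ℝ × ℝ, |z.1| ≤ ρ → |z.2| ≤ ρ → ENNReal.ofReal m ≤ f z) :
    ENNReal.ofReal (m * ε * η ^ 2 / 4) ≤
      ∫⁻ z, (Set.indicator (Set.Ioo (η / 2) η ×ˢ Set.Ioo (-2 * ε) (-ε))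
        (fun z : ℝ × ℝ => ENNReal.ofReal z.1) z) * f z := by
  set S : Set (ℝ × ℝ) := Set.Ioo (η / 2) η ×ˢ Set.Ioo (-2 * ε) (-ε) with hS
  have mS : MeasurableSet S := measurableSet_Ioo.prod measurableSet_Ioo
  have hv : volume S = ENNReal.ofReal (η / 2 * ε) := by
    rw [hS, Measure.volume_eq_prod, Measure.prod_prod, Real.volume_Ioo, Real.volume_Ioo,
      ← ENNReal.ofReal_mul (by linarith)]
    congr 1; ring
  calc ENNReal.ofReal (m * ε * η ^ 2 / 4) = ∫⁻ z, S.indicator (fun _ => ENNReal.ofReal (η / 2 * m)) z := by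
        rw [lintegral_indicator mS, setLIntegral_const, hv, ← ENNReal.ofReal_mul (by positivity)]
        congr 1; ring
    _ ≤ _ := by
        refine lintegral_mono fun z => ?_
        by_cases hz : z ∈ S
        · rw [Set.indicator_of_mem hz, Set.indicator_of_mem hz, ENNReal.ofReal_mul (by positivity)]
          obtain ⟨⟨h1, h2⟩, ⟨h3, h4⟩⟩ := hz
          gcongr
          apply hlow
          · rw [abs_le]; constructor <;> linarith
          · rw [abs_le]; constructor <;> linarith
        · rw [Set.indicator_of_notMem hz]; exact zero_le

lemma rotate {k : ℕ} (u e : Fin (k + 2) → ℝ) (hu : u ⬝ᵥ u = 1) (he : e ⬝ᵥ e = 1)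
    (hue : u ⬝ᵥ e = 0) : ∃ Φ : (ℝ × ℝ) × (Fin k → ℝ) → (Fin (k + 2) → ℝ),
    MeasurePreserving Φ volume volume ∧
    (∀ x y, ∀ l m : ℝ, Φ (l • x + m • y) = l • Φ x + m • Φ y) ∧
    ∀ w, u ⬝ᵥ Φ w = w.1.1 ∧ e ⬝ᵥ Φ w = w.1.2 := by
  have hin : ∀ a b : Fin (k + 2) → ℝ, inner ℝ (WithLp.toLp 2 a) (WithLp.toLp 2 b) = a ⬝ᵥ b := by
    intro a b
    simp [EuclideanSpace.inner_eq_star_dotProduct, dotProduct_comm]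
  have hort : Orthonormal ℝ (Set.domRestrict ({0, 1} : Set (Fin (k + 2)))
      (fun i : Fin (k + 2) => if i = 0 then WithLp.toLp 2 u else WithLp.toLp 2 e)) := by
    rw [orthonormal_iff_ite]
    rintro ⟨i, hi⟩ ⟨j, hj⟩
    have h01 : (0 : Fin (k + 2)) ≠ 1 := by simp
    rcases hi with rfl | rfl <;> rcases hj with rfl | rfl <;>
      simp only [Set.domRestrict, if_true, h01.symm, if_false, hin, hu, he,
        hue, dotProduct_comm e u]
    · rw [if_neg]
      intro h
      exact h01 (congrArg Subtype.val h)
    · rw [if_neg]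
      intro h
      exact h01 (congrArg Subtype.val h).symm
  obtain ⟨b, hb⟩ := hort.exists_orthonormalBasis_extension_of_card_eq (by simp)
  have hb0 : b 0 = WithLp.toLp 2 u := by simpa using hb 0 (by simp)
  have hb1 : b 1 = WithLp.toLp 2 e := by simpa using hb 1 (by simp)
  set P2 := (MeasurableEquiv.piFinSuccAbove (fun _ : Fin (k + 2) => ℝ) 0).symm with hP2
  set P1 := (MeasurableEquiv.piFinSuccAbove (fun _ : Fin (k + 1) => ℝ) 0).symm with hP1
  have mp2 : MeasurePreserving P2 volume volume :=
    (volume_preserving_piFinSuccAbove (fun _ : Fin (k + 2) => ℝ) 0).symm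
  have mp1 : MeasurePreserving P1 volume volume :=
    (volume_preserving_piFinSuccAbove (fun _ : Fin (k + 1) => ℝ) 0).symm
  have mpa : MeasurePreserving (fun w : (ℝ × ℝ) × (Fin k → ℝ) => (w.1.1, (w.1.2, w.2)))
      volume volume := measurePreserving_prodAssoc volume volume volume
  have mpp : MeasurePreserving (Prod.map (id : ℝ → ℝ) P1) volume volume :=
    (MeasurePreserving.id volume).prod mp1
  have mpb := b.repr.symm.measurePreserving
  have mpt := PiLp.volume_preserving_toLp (Fin (k + 2))
  have mpo := PiLp.volume_preserving_ofLp (Fin (k + 2))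
  refine ⟨fun w => WithLp.ofLp (b.repr.symm (WithLp.toLp 2 (P2 (w.1.1, P1 (w.1.2, w.2))))), ?_, ?_, ?_⟩
  · exact mpo.comp (mpb.comp (mpt.comp (mp2.comp (mpp.comp mpa))))
  · intro x y l m
    have h1 : ∀ w w' : ℝ × (Fin k → ℝ), P1 (l • w + m • w') = l • P1 w + m • P1 w' := by
      intro x y
      ext i
      refine Fin.cases ?_ (fun j => ?_) i <;> simp [hP1, MeasurableEquiv.piFinSuccAbove]
    have h2 : ∀ w w' : ℝ × (Fin (k + 1) → ℝ), P2 (l • w + m • w') = l • P2 w + m • P2 w' := by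
      intro x y
      ext i
      refine Fin.cases ?_ (fun j => ?_) i <;> simp [hP2, MeasurableEquiv.piFinSuccAbove]
    have e1 := h1 (x.1.2, x.2) (y.1.2, y.2)
    have e2 := h2 (x.1.1, P1 (x.1.2, x.2)) (y.1.1, P1 (y.1.2, y.2))
    simp only [Prod.smul_mk, Prod.mk_add_mk] at e1 e2
    simp only [Prod.fst_add, Prod.snd_add, Prod.smul_fst, Prod.smul_snd]
    rw [e1, e2, WithLp.toLp_add, WithLp.toLp_smul, WithLp.toLp_smul, map_add, map_smul, map_smul]
    rfl
  · intro w
    have key : ∀ (i : Fin (k + 2)) (a : Fin (k + 2) → ℝ), b i = WithLp.toLp 2 a → 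
        ∀ y : EuclideanSpace ℝ (Fin (k + 2)), a ⬝ᵥ WithLp.ofLp (b.repr.symm y) = y i := by
      intro i a ha y
      rw [← hin, ← ha, WithLp.toLp_ofLp, ← b.repr_apply_apply, LinearIsometryEquiv.apply_symm_apply]
    refine ⟨?_, ?_⟩
    · rw [key 0 u hb0]
      simp [hP2, MeasurableEquiv.piFinSuccAbove]
    · rw [key 1 e hb1]
      simp only [hP2, hP1, MeasurableEquiv.piFinSuccAbove]
      rfl

lemma marginal {d : ℕ} (u e : Fin d → ℝ) (hu : u ⬝ᵥ u = 1) (he : e ⬝ᵥ e = 1)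
    (hue : u ⬝ᵥ e = 0) {q : (Fin d → ℝ) → ENNReal} (hq : Measurable q) (hlc : LCE q) :
    ∃ f : ℝ × ℝ → ENNReal, Measurable f ∧ LCE f ∧ ∀ G : ℝ × ℝ → ENNReal, Measurable G →
      ∫⁻ x, G (u ⬝ᵥ x, e ⬝ᵥ x) ∂(volume.withDensity q) = ∫⁻ a, G a * f a := by
  obtain ⟨k, rfl⟩ : ∃ k, d = k + 2 := by
    rcases d with _ | _ | k
    · simp at hu
    · simp [dotProduct] at hu he hue
      rcases hue with h | h <;> simp [h] at hu he
    · exact ⟨k, rfl⟩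
  obtain ⟨Φ, mp, hlin, hΦ⟩ := rotate u e hu he hue
  have mqΦ : Measurable fun w => q (Φ w) := hq.comp mp.measurable
  refine ⟨fun a => ∫⁻ z, q (Φ (a, z)), mqΦ.lintegral_prod_right', ?_, ?_⟩
  · intro x y l m hl hm hlm
    refine pl_pi k (mqΦ.comp measurable_prodMk_left) (mqΦ.comp measurable_prodMk_left)
      (mqΦ.comp measurable_prodMk_left) hl hm hlm ?_
    intro z w
    have h := hlc (Φ (x, z)) (Φ (y, w)) l m hl hm hlm
    rw [← hlin] at h
    simpa using h
  · intro G hG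
    have hc : Continuous fun x : Fin (k + 2) → ℝ => (u ⬝ᵥ x, e ⬝ᵥ x) := by
      unfold dotProduct; fun_prop
    have hGm : Measurable fun x : Fin (k + 2) → ℝ => G (u ⬝ᵥ x, e ⬝ᵥ x) := hG.comp hc.measurable
    rw [lintegral_withDensity_eq_lintegral_mul _ hq hGm, ← mp.lintegral_comp (hq.mul hGm)]
    simp only [Pi.mul_apply, (hΦ _).1, (hΦ _).2]
    rw [Measure.volume_eq_prod, lintegral_prod]
    · refine lintegral_congr fun a => ?_
      have hmz : Measurable fun z => q (Φ (a, z)) := mqΦ.comp measurable_prodMk_left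
      simp only
      rw [lintegral_mul_const _ hmz, mul_comm]
    · exact (mqΦ.mul (hG.comp measurable_fst)).aemeasurable

lemma meas_dot {d : ℕ} (a : Fin d → ℝ) : Measurable fun x : Fin d → ℝ => a ⬝ᵥ x := by
  have : Continuous fun x : Fin d → ℝ => a ⬝ᵥ x := by unfold dotProduct; fun_prop
  exact this.measurable

/-- normalized log-concave density with covariance eigenvalues in `[C⁻¹, C]` -/
structure GoodDens {d : ℕ} (C : ℝ) (q : (Fin d → ℝ) → ENNReal) : Prop where
  meas : Measurable q
  lc : LCE q
  prob : IsProbabilityMeasure ((volume : Measure (Fin d → ℝ)).withDensity q)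
  int : ∀ a : Fin d → ℝ, a ⬝ᵥ a = 1 →
    Integrable (fun x => (a ⬝ᵥ x) ^ 2) ((volume : Measure (Fin d → ℝ)).withDensity q)
  le : ∀ a : Fin d → ℝ, a ⬝ᵥ a = 1 → ∫ x, (a ⬝ᵥ x) ^ 2 ∂(volume.withDensity q) ≤ C
  ge : ∀ a : Fin d → ℝ, a ⬝ᵥ a = 1 → C⁻¹ ≤ ∫ x, (a ⬝ᵥ x) ^ 2 ∂(volume.withDensity q)
  mean : ∀ a : Fin d → ℝ, ∫ x, a ⬝ᵥ x ∂(volume.withDensity q) = 0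

lemma main_q (C : ℝ) (hC : 0 < C) : ∃ κ m ρ M : ℝ, 0 < κ ∧ 0 < m ∧ 0 < ρ ∧ ρ ≤ 1 ∧ 0 < M ∧
    ∀ (d : ℕ) (q : (Fin d → ℝ) → ENNReal), GoodDens C q →
    (∀ a : Fin d → ℝ, a ⬝ᵥ a = 1 → κ ≤ ∫ x, |a ⬝ᵥ x| ∂(volume.withDensity q)) ∧
    ∀ u e : Fin d → ℝ, u ⬝ᵥ u = 1 → e ⬝ᵥ e = 1 → u ⬝ᵥ e = 0 →
      ∃ f : ℝ × ℝ → ENNReal, Measurable f ∧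
        (∀ z : ℝ × ℝ, |z.1| ≤ ρ → |z.2| ≤ ρ → ENNReal.ofReal m ≤ f z) ∧
        (∀ z : ℝ × ℝ, f z ≤ ENNReal.ofReal (M / (1 + z.2 ^ 2) ^ 2)) ∧
        ∀ G : ℝ × ℝ → ENNReal, Measurable G →
          ∫⁻ x, G (u ⬝ᵥ x, e ⬝ᵥ x) ∂(volume.withDensity q) = ∫⁻ a, G a * f a := by
  obtain ⟨κ, r, c, hκ, hr, hc, H1⟩ := halfspace_mass C hC
  obtain ⟨m, ρ, hm, hρ, hρ1, H2⟩ := dens_lower C c r hC hc hr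
  obtain ⟨M, hM, H3⟩ := dens_upper C m ρ hC hm hρ hρ1
  refine ⟨κ, m, ρ, M, hκ, hm, hρ, hρ1, hM, ?_⟩
  intro d q hq
  have := hq.prob
  have key : ∀ a : Fin d → ℝ, a ⬝ᵥ a = 1 → κ ≤ ∫ x, |a ⬝ᵥ x| ∂(volume.withDensity q) ∧
      ENNReal.ofReal c ≤ (volume.withDensity q) {x | r ≤ a ⬝ᵥ x} := by
    intro a ha
    refine H1 _ _ (volume.withDensity q) hq.prob (fun x => a ⬝ᵥ x) (meas_dot a) (hq.int a ha)
      (hq.le a ha) (hq.ge a ha) (hq.mean a) ?_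
    intro R
    have hm := (meas_dot a).abs
    rw [withDensity_apply _ (measurableSet_lt measurable_const hm),
      withDensity_apply _ (measurableSet_lt measurable_const hm),
      withDensity_apply _ (measurableSet_le hm measurable_const)]
    exact borell hq.meas hq.lc a R
  refine ⟨fun a ha => (key a ha).1, ?_⟩
  intro u e hu he hue
  obtain ⟨f, hf, hlc, hG⟩ := marginal u e hu he hue hq.meas hq.lc
  have hsq : ∀ a : Fin d → ℝ, a ⬝ᵥ a = 1 →
      ∫⁻ x, ENNReal.ofReal ((a ⬝ᵥ x) ^ 2) ∂(volume.withDensity q) ≤ ENNReal.ofReal C := by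
    intro a ha
    rw [← ofReal_integral_eq_lintegral_ofReal (hq.int a ha)
      (Filter.Eventually.of_forall fun x => by positivity)]
    exact ENNReal.ofReal_le_ofReal (hq.le a ha)
  have f1 : ∫⁻ z, ENNReal.ofReal (z.1 ^ 2) * f z ≤ ENNReal.ofReal C := by
    rw [← hG (fun z => ENNReal.ofReal (z.1 ^ 2)) (by fun_prop)]
    exact hsq u hu
  have f2 : ∫⁻ z, ENNReal.ofReal (z.2 ^ 2) * f z ≤ ENNReal.ofReal C := by
    rw [← hG (fun z => ENNReal.ofReal (z.2 ^ 2)) (by fun_prop)]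
    exact hsq e he
  have f0 : ∫⁻ z, f z ≤ 1 := by
    have h := hG (fun _ => 1) measurable_const
    simp only [lintegral_const, one_mul, measure_univ] at h
    exact h.symm.le
  have fH : ∀ α β : ℝ, α ^ 2 + β ^ 2 = 1 →
      ENNReal.ofReal c ≤ ∫⁻ z in {z : ℝ × ℝ | r ≤ α * z.1 + β * z.2}, f z := by
    intro α β hab
    have mH : MeasurableSet {z : ℝ × ℝ | r ≤ α * z.1 + β * z.2} :=
      measurableSet_le measurable_const (by fun_prop)
    have hunit : (α • u + β • e) ⬝ᵥ (α • u + β • e) = 1 := by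
      simp only [dotProduct_add, add_dotProduct, smul_dotProduct, dotProduct_smul, smul_eq_mul,
        hu, he, hue, dotProduct_comm e u]
      linarith
    refine (key _ hunit).2.trans (le_of_eq ?_)
    have h := hG (Set.indicator {z : ℝ × ℝ | r ≤ α * z.1 + β * z.2} (fun _ => 1))
      (measurable_const.indicator mH)
    have e1 : ∀ z, (Set.indicator {z : ℝ × ℝ | r ≤ α * z.1 + β * z.2} (fun _ => (1:ENNReal)) z) * f z
        = Set.indicator {z : ℝ × ℝ | r ≤ α * z.1 + β * z.2} f z := by
      intro z
      by_cases hz : z ∈ {z : ℝ × ℝ | r ≤ α * z.1 + β * z.2}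
      · simp [Set.indicator_of_mem hz]
      · simp [Set.indicator_of_notMem hz]
    simp only [e1] at h
    rw [lintegral_indicator mH] at h
    rw [← h, ← lintegral_indicator_one (measurableSet_le measurable_const (meas_dot _))]
    refine lintegral_congr fun x => ?_
    simp only [Set.indicator, Set.mem_ofPred_eq, add_dotProduct, smul_dotProduct, smul_eq_mul]
    rfl
  have hlow := H2 f hf hlc f1 f2 fH
  exact ⟨f, hf, hlow, H3 f hf hlc f0 f2 hlow, hG⟩

/-- the integrand -/
def Ifn {d : ℕ} (u v x : Fin d → ℝ) : ℝ :=
  |u ⬝ᵥ x| * (if Real.sign (u ⬝ᵥ x) = Real.sign (v ⬝ᵥ x) then 0 else 1)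

lemma Ifn_nonneg {d : ℕ} (u v x : Fin d → ℝ) : 0 ≤ Ifn u v x := by
  unfold Ifn; split_ifs <;> simp

lemma Ifn_le {d : ℕ} (u v x : Fin d → ℝ) : Ifn u v x ≤ |u ⬝ᵥ x| := by
  unfold Ifn; split_ifs <;> simp

lemma eNorm_sq {d : ℕ} (x : Fin d → ℝ) : eNorm x ^ 2 = x ⬝ᵥ x := by
  unfold eNorm
  rw [Real.sq_sqrt (Finset.sum_nonneg fun i _ => sq_nonneg _)]
  simp [dotProduct, sq]

lemma dot_le {d : ℕ} (u c : Fin d → ℝ) (hu : u ⬝ᵥ u = 1) : |u ⬝ᵥ c| ≤ eNorm c := by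
  apply abs_le_of_sq_le_sq
  · rw [eNorm_sq]
    have := Finset.sum_mul_sq_le_sq_mul_sq Finset.univ u c
    have h1 : ∑ i, u i ^ 2 = u ⬝ᵥ u := by simp [dotProduct, sq]
    have h2 : ∑ i, c i ^ 2 = c ⬝ᵥ c := by simp [dotProduct, sq]
    rw [h1, h2, hu, one_mul] at this
    exact this
  · exact Real.sqrt_nonneg _

/-- orthonormal completion in the plane of `u, v` -/
lemma exists_e {d : ℕ} (u v : Fin d → ℝ) (hu : u ⬝ᵥ u = 1) (hv : v ⬝ᵥ v = 1)
    (h : (u ⬝ᵥ v) ^ 2 < 1) : ∃ (e : Fin d → ℝ) (σ : ℝ), e ⬝ᵥ e = 1 ∧ u ⬝ᵥ e = 0 ∧ 0 < σ ∧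
      σ ^ 2 = 1 - (u ⬝ᵥ v) ^ 2 ∧ ∀ x, v ⬝ᵥ x = (u ⬝ᵥ v) * (u ⬝ᵥ x) + σ * (e ⬝ᵥ x) := by
  set t := u ⬝ᵥ v with ht
  have hs2 : Real.sqrt (1 - t ^ 2) ^ 2 = 1 - t ^ 2 := Real.sq_sqrt (by linarith)
  have hs0 : 0 < Real.sqrt (1 - t ^ 2) := Real.sqrt_pos.2 (by linarith)
  set σ := Real.sqrt (1 - t ^ 2)
  refine ⟨σ⁻¹ • (v - t • u), σ, ?_, ?_, hs0, hs2, ?_⟩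
  · simp only [dotProduct_smul, smul_dotProduct, sub_dotProduct, dotProduct_sub, smul_eq_mul, hu, hv,
      dotProduct_comm v u, ← ht]
    field_simp
    linarith
  · simp only [dotProduct_smul, dotProduct_sub, smul_eq_mul, hu, ← ht]
    ring
  · intro x
    simp only [smul_dotProduct, sub_dotProduct, smul_eq_mul]
    field_simp
    ring

lemma upper_q (C : ℝ) (hC : 0 < C) : ∃ L : ℝ, 0 < L ∧
    ∀ (d : ℕ) (q : (Fin d → ℝ) → ENNReal), GoodDens C q →
    ∀ c : Fin d → ℝ, eNorm c ≤ C → ∀ u v : Fin d → ℝ, u ⬝ᵥ u = 1 → v ⬝ᵥ v = 1 →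
      ∫⁻ y, ENNReal.ofReal (Ifn u v (y + c)) ∂(volume.withDensity q)
        ≤ ENNReal.ofReal (L * eNorm (u - v) ^ 2) := by
  obtain ⟨κ, m, ρ, M, hκ, hm, hρ, hρ1, hM, H⟩ := main_q C hC
  obtain ⟨L, hL, HL⟩ := upper_int C M hM
  refine ⟨L + (1 + 2 * C), by positivity, ?_⟩
  intro d q hq c hc u v hu hv
  have := hq.prob
  rw [eNorm_sq]
  have hδ : (u - v) ⬝ᵥ (u - v) = 2 - 2 * (u ⬝ᵥ v) := by
    simp only [sub_dotProduct, dotProduct_sub, hu, hv, dotProduct_comm v u]; ring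
  have hδ0 : 0 ≤ (u - v) ⬝ᵥ (u - v) := by rw [← eNorm_sq]; positivity
  set t := u ⬝ᵥ v with ht
  rcases lt_or_ge t (1/2) with h | h
  · have hpt : ∀ y, Ifn u v (y + c) ≤ 1 + C + (u ⬝ᵥ y) ^ 2 := by
      intro y
      refine (Ifn_le _ _ _).trans ?_
      rw [dotProduct_add]
      have h1 := abs_add_le (u ⬝ᵥ y) (u ⬝ᵥ c)
      have h2 := (dot_le u c hu).trans hc
      have h3 : |u ⬝ᵥ y| ≤ 1 + (u ⬝ᵥ y) ^ 2 := by
        rw [← sq_abs (u ⬝ᵥ y)]; nlinarith [sq_nonneg (|u ⬝ᵥ y| - 1), abs_nonneg (u ⬝ᵥ y)]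
      linarith
    calc _ ≤ ∫⁻ y, ENNReal.ofReal (1 + C + (u ⬝ᵥ y) ^ 2) ∂(volume.withDensity q) :=
          lintegral_mono fun y => ENNReal.ofReal_le_ofReal (hpt y)
      _ = ENNReal.ofReal (∫ y, (1 + C + (u ⬝ᵥ y) ^ 2) ∂(volume.withDensity q)) := by
          have hia : Integrable (fun y => 1 + C + (u ⬝ᵥ y) ^ 2) (volume.withDensity q) :=
            (integrable_const _).add (hq.int u hu)
          rw [ofReal_integral_eq_lintegral_ofReal hia
            (Filter.Eventually.of_forall fun y => by positivity)]
      _ ≤ _ := by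
          apply ENNReal.ofReal_le_ofReal
          rw [integral_add (integrable_const _) (hq.int u hu)]
          simp only [integral_const, probReal_univ, one_smul]
          have := hq.le u hu
          rw [hδ]
          nlinarith
  · rcases eq_or_lt_of_le hδ0 with h0 | h0
    · have huv : u = v := by
        have := dotProduct_self_eq_zero.1 h0.symm
        exact sub_eq_zero.1 this
      subst huv
      simp [Ifn]
    · have ht1 : t < 1 := by linarith
      obtain ⟨e, σ, he, hue, hσ, hσ2, hve⟩ := exists_e u v hu hv (by rw [← ht]; nlinarith)
      rw [← ht] at hσ2
      obtain ⟨f, hf, -, hup, hG⟩ := (H d q hq).2 u e hu he hue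
      have hU := HL f hf hup (u ⬝ᵥ c) (e ⬝ᵥ c) σ ((dot_le e c he).trans hc) hσ.le
      have mS : MeasurableSet {z : ℝ × ℝ | |z.1 + u ⬝ᵥ c| ≤ 2 * σ * |z.2 + e ⬝ᵥ c|} :=
        measurableSet_le (by fun_prop) (by fun_prop)
      rw [← hG _ (Measurable.indicator (by fun_prop) mS)] at hU
      refine le_trans (lintegral_mono fun y => ?_) (hU.trans (ENNReal.ofReal_le_ofReal ?_))
      · have hv' := hve (y + c)
        unfold Ifn
        split_ifs with hs
        · simp
        · have hcl : |u ⬝ᵥ (y + c)| ≤ 2 * σ * |e ⬝ᵥ (y + c)| := by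
            rw [hv'] at hs
            set a := u ⬝ᵥ (y + c)
            set b := e ⬝ᵥ (y + c)
            have hb1 : σ * b ≤ σ * |b| := by gcongr; exact le_abs_self b
            have hb2 : -(σ * b) ≤ σ * |b| := by
              have := neg_abs_le b; nlinarith
            rcases lt_trichotomy a 0 with ha | ha | ha
            · rw [Real.sign_of_neg ha] at hs
              have h3 : 0 ≤ t * a + σ * b := by
                by_contra hcon
                exact hs (Real.sign_of_neg (not_le.1 hcon)).symm
              rw [abs_of_neg ha]
              nlinarith
            · rw [ha, abs_zero]; positivity
            · rw [Real.sign_of_pos ha] at hs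
              have h3 : t * a + σ * b ≤ 0 := by
                by_contra hcon
                exact hs (Real.sign_of_pos (not_le.1 hcon)).symm
              rw [abs_of_pos ha]
              nlinarith
          rw [Set.indicator_of_mem]
          · rw [mul_one]
            apply ENNReal.ofReal_le_ofReal
            simpa only [dotProduct_add] using hcl
          · rw [dotProduct_add, dotProduct_add] at hcl
            exact hcl
      · rw [hδ, hσ2]
        have h3 : 0 ≤ L * ((1 - t) * (1 - t)) := mul_nonneg hL.le (mul_nonneg (by linarith) (by linarith))
        have h4 : 0 ≤ (1 + 2 * C) * (2 - 2 * t) := mul_nonneg (by positivity) (by linarith)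
        nlinarith

set_option maxHeartbeats 1000000 in
lemma lower_q (C : ℝ) (hC : 0 < C) : ∃ w : ℝ, 0 < w ∧
    ∀ (d : ℕ) (q : (Fin d → ℝ) → ENNReal), GoodDens C q →
    ∀ u v : Fin d → ℝ, u ⬝ᵥ u = 1 → v ⬝ᵥ v = 1 →
      ENNReal.ofReal (w * eNorm (u - v) ^ 2) ≤
      ∫⁻ y, ENNReal.ofReal (Ifn u v y) ∂(volume.withDensity q) := by
  obtain ⟨κ, m, ρ, M, hκ, hm, hρ, hρ1, hM, H⟩ := main_q C hC
  set ε := ρ / 2 with hε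
  have hε0 : 0 < ε := by positivity
  refine ⟨min (κ / 4) (m * ε ^ 3 / 16), by positivity, ?_⟩
  intro d q hq u v hu hv
  have := hq.prob
  rw [eNorm_sq]
  have hδ : (u - v) ⬝ᵥ (u - v) = 2 - 2 * (u ⬝ᵥ v) := by
    simp only [sub_dotProduct, dotProduct_sub, hu, hv, dotProduct_comm v u]; ring
  have hδ0 : 0 ≤ (u - v) ⬝ᵥ (u - v) := by rw [← eNorm_sq]; positivity
  have hγ : (u + v) ⬝ᵥ (u + v) = 2 + 2 * (u ⬝ᵥ v) := by
    simp only [add_dotProduct, dotProduct_add, hu, hv, dotProduct_comm v u]; ring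
  have hγ0 : 0 ≤ (u + v) ⬝ᵥ (u + v) := by rw [← eNorm_sq]; positivity
  rcases eq_or_lt_of_le hδ0 with h0 | h0
  · rw [← h0]; simp
  rcases eq_or_lt_of_le hγ0 with h1 | h1
  · have huv : v = -u := by
      have := dotProduct_self_eq_zero.1 h1.symm
      exact (neg_eq_of_add_eq_zero_right this).symm
    have hI : ∀ y, Ifn u v y = |u ⬝ᵥ y| := by
      intro y
      unfold Ifn
      rw [huv, neg_dotProduct, Real.sign_neg]
      split_ifs with h
      · have : Real.sign (u ⬝ᵥ y) = 0 := by linarith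
        rw [Real.sign_eq_zero_iff] at this
        simp [this]
      · simp
    simp only [hI]
    have hL2 : MemLp (fun y => u ⬝ᵥ y) 2 (volume.withDensity q) :=
      (memLp_two_iff_integrable_sq (meas_dot u).aestronglyMeasurable).2 (hq.int u hu)
    have hI1 : Integrable (fun y => u ⬝ᵥ y) (volume.withDensity q) := hL2.integrable (by norm_num)
    rw [← ofReal_integral_eq_lintegral_ofReal hI1.abs
      (Filter.Eventually.of_forall fun y => abs_nonneg _)]
    apply ENNReal.ofReal_le_ofReal
    refine le_trans ?_ ((H d q hq).1 u hu)
    have h2 : (u - v) ⬝ᵥ (u - v) = 4 := by linarith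
    rw [h2]
    have := min_le_left (κ / 4) (m * ε ^ 3 / 16)
    linarith
  set t := u ⬝ᵥ v with ht
  have ht1 : t < 1 := by linarith
  have ht2 : -1 < t := by linarith
  obtain ⟨e, σ, he, hue, hσ, hσ2, hve⟩ := exists_e u v hu hv (by rw [← ht]; nlinarith)
  rw [← ht] at hσ2
  have hσ1 : σ ≤ 1 := by nlinarith [sq_nonneg t]
  obtain ⟨f, hf, hlow, -, hG⟩ := (H d q hq).2 u e hu he hue
  set η := if 0 ≤ t then ε * σ else ε with hη
  have hη0 : 0 < η := by rw [hη]; split_ifs <;> positivity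
  have hηε : η ≤ ε := by
    rw [hη]; split_ifs
    · nlinarith
    · exact le_rfl
  have hlo := lower_int m ρ ε η hm hη0 hηε (by linarith) f hlow
  have mS : MeasurableSet (Set.Ioo (η / 2) η ×ˢ Set.Ioo (-2 * ε) (-ε)) :=
    measurableSet_Ioo.prod measurableSet_Ioo
  rw [← hG _ (Measurable.indicator (by fun_prop) mS)] at hlo
  refine le_trans (ENNReal.ofReal_le_ofReal ?_) (hlo.trans (lintegral_mono fun y => ?_))
  · rw [hδ]
    have h2 := min_le_right (κ / 4) (m * ε ^ 3 / 16)
    refine (mul_le_mul_of_nonneg_right h2 (by linarith)).trans ?_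
    have hP : 0 < m * ε ^ 3 := by positivity
    rw [hη]
    split_ifs with h
    · have e1 : m * ε * (ε * σ) ^ 2 / 4 = m * ε ^ 3 * (1 - t ^ 2) / 4 := by rw [← hσ2]; ring
      rw [e1]
      have : (2 - 2 * t) / 16 ≤ (1 - t ^ 2) / 4 := by nlinarith
      have := mul_le_mul_of_nonneg_left this hP.le
      linarith
    · have e1 : m * ε * ε ^ 2 / 4 = m * ε ^ 3 * (1 / 4) := by ring
      rw [e1]
      have : (2 - 2 * t) / 16 ≤ 1 / 4 := by linarith
      have := mul_le_mul_of_nonneg_left this hP.le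
      linarith
  · by_cases hz : (u ⬝ᵥ y, e ⬝ᵥ y) ∈ Set.Ioo (η / 2) η ×ˢ Set.Ioo (-2 * ε) (-ε)
    · rw [Set.indicator_of_mem hz]
      obtain ⟨⟨a1, a2⟩, ⟨a3, a4⟩⟩ := hz
      simp only at a1 a2 a3 a4
      apply ENNReal.ofReal_le_ofReal
      have hup : 0 < u ⬝ᵥ y := by linarith
      have hvn : v ⬝ᵥ y < 0 := by
        rw [hve y]
        have hb : σ * (e ⬝ᵥ y) < -(σ * ε) := by
          have := mul_lt_mul_of_pos_left a4 hσ
          linarith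
        rcases le_or_gt 0 t with h | h
        · rw [hη, if_pos h] at a2
          have : t * (u ⬝ᵥ y) ≤ 1 * (u ⬝ᵥ y) := mul_le_mul_of_nonneg_right ht1.le hup.le
          linarith [mul_comm ε σ]
        · have : t * (u ⬝ᵥ y) < 0 := mul_neg_of_neg_of_pos h hup
          linarith [mul_pos hσ hε0]
      unfold Ifn
      rw [Real.sign_of_pos hup, Real.sign_of_neg hvn, if_neg (by norm_num), mul_one]
      exact le_abs_self _
    · rw [Set.indicator_of_notMem hz]; exact zero_le

lemma meas_sign : Measurable Real.sign := by
  have : Real.sign = fun r : ℝ => if r < 0 then (-1 : ℝ) else if 0 < r then 1 else 0 := rfl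
  rw [this]
  exact Measurable.ite measurableSet_Iio measurable_const
    (Measurable.ite measurableSet_Ioi measurable_const measurable_const)

lemma meas_Ifn {d : ℕ} (u v : Fin d → ℝ) : Measurable (Ifn u v) := by
  unfold Ifn
  exact (meas_dot u).abs.mul (Measurable.ite
    (measurableSet_eq_fun (meas_sign.comp (meas_dot u)) (meas_sign.comp (meas_dot v)))
    measurable_const measurable_const)

lemma eNorm_one {d : ℕ} {a : Fin d → ℝ} : eNorm a = 1 ↔ a ⬝ᵥ a = 1 := by
  rw [← eNorm_sq]
  have : 0 ≤ eNorm a := Real.sqrt_nonneg _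
  constructor
  · intro h; rw [h]; norm_num
  · intro h; nlinarith

lemma reduce {d : ℕ} (C : ℝ) (hC : 0 < C) {Ω : Type} [MeasurableSpace Ω] (μ : Measure Ω)
    [IsProbabilityMeasure μ] (X : Ω → Fin d → ℝ) (hX : Measurable X) (p : (Fin d → ℝ) → ℝ)
    (hp0 : ∀ x, 0 ≤ p x) (hp : IsLogConcaveFn p)
    (hmap : μ.map X = MeasureTheory.volume.withDensity (fun x => ENNReal.ofReal (p x)))
    (c : Fin d → ℝ) (hc : c = fun i => ∫ ω, X ω i ∂μ)
    (hcov : ∀ a : Fin d → ℝ, eNorm a = 1 →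
          C⁻¹ ≤ ∫ ω, (a ⬝ᵥ X ω - a ⬝ᵥ c) ^ 2 ∂μ ∧ ∫ ω, (a ⬝ᵥ X ω - a ⬝ᵥ c) ^ 2 ∂μ ≤ C) :
    ∃ q : (Fin d → ℝ) → ENNReal, GoodDens C q ∧ ∀ u v : Fin d → ℝ, u ⬝ᵥ u = 1 →
      ENNReal.ofReal (∫ ω, Ifn u v (X ω) ∂μ) =
        ∫⁻ y, ENNReal.ofReal (Ifn u v (y + c)) ∂(volume.withDensity q) := by
  obtain ⟨q0, q0m, q0l, hq0⟩ := reg_density p hp0 hp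
  rw [withDensity_congr_ae hq0] at hmap
  set Y : Ω → Fin d → ℝ := fun ω => X ω - c with hY
  have hYm : Measurable Y := hX.sub_const c
  have hYmap : μ.map Y = volume.withDensity (fun y => q0 (y + c)) := by
    have h1 : μ.map Y = (μ.map X).map (fun x => x - c) := by
      rw [Measure.map_map (by fun_prop) hX]; rfl
    rw [h1, hmap]
    ext s hs
    have hsm : MeasurableSet ((fun x : Fin d → ℝ => x - c) ⁻¹' s) :=
      (measurable_id.sub_const c) hs
    rw [Measure.map_apply (by fun_prop) hs, withDensity_apply _ hsm, withDensity_apply _ hs,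
      ← (measurePreserving_add_right (volume : Measure (Fin d → ℝ)) c).setLIntegral_comp_preimage
        hsm q0m]
    have h2 : (fun x : Fin d → ℝ => x + c) ⁻¹' ((fun x => x - c) ⁻¹' s) = s := by
      ext x; simp
    rw [h2]
  have hIntg2 : ∀ a : Fin d → ℝ, a ⬝ᵥ a = 1 → Integrable (fun ω => (a ⬝ᵥ Y ω) ^ 2) μ := by
    intro a ha
    have h1 := (hcov a (eNorm_one.2 ha)).1
    have h2 : (fun ω => (a ⬝ᵥ Y ω) ^ 2) = fun ω => (a ⬝ᵥ X ω - a ⬝ᵥ c) ^ 2 := by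
      funext ω; rw [hY]; simp only [dotProduct_sub]
    rw [h2]
    by_contra hcon
    rw [integral_undef hcon] at h1
    have : 0 < C⁻¹ := by positivity
    linarith
  have heq2 : ∀ a : Fin d → ℝ, ∫ ω, (a ⬝ᵥ Y ω) ^ 2 ∂μ = ∫ ω, (a ⬝ᵥ X ω - a ⬝ᵥ c) ^ 2 ∂μ := by
    intro a
    refine integral_congr_ae (Filter.Eventually.of_forall fun ω => ?_)
    simp only [hY, dotProduct_sub]
  have hIntg1 : ∀ a : Fin d → ℝ, a ⬝ᵥ a = 1 → Integrable (fun ω => a ⬝ᵥ Y ω) μ := by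
    intro a ha
    have hL2 : MemLp (fun ω => a ⬝ᵥ Y ω) 2 μ :=
      (memLp_two_iff_integrable_sq ((meas_dot a).comp hYm).aestronglyMeasurable).2 (hIntg2 a ha)
    exact hL2.integrable (by norm_num)
  have hYi : ∀ i, Integrable (fun ω => Y ω i) μ := by
    intro i
    have := hIntg1 (Pi.single i 1) (by simp)
    simpa using this
  have hYi0 : ∀ i, ∫ ω, Y ω i ∂μ = 0 := by
    intro i
    have hXi : Integrable (fun ω => X ω i) μ := by
      have := (hYi i).add (integrable_const (c i))
      refine this.congr (Filter.Eventually.of_forall fun ω => ?_)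
      simp [hY]
    simp only [hY, Pi.sub_apply]
    rw [integral_sub hXi (integrable_const _)]
    simp [hc]
  have hqm : Measurable fun y => q0 (y + c) := q0m.comp (measurable_id.add_const c)
  have sqm : ∀ a : Fin d → ℝ, Measurable fun x : Fin d → ℝ => (a ⬝ᵥ x) ^ 2 :=
    fun a => (meas_dot a).pow_const 2
  refine ⟨fun y => q0 (y + c), ⟨hqm, ?_, ?_, ?_, ?_, ?_, ?_⟩, ?_⟩
  · intro x y l m hl hm hlm
    have := q0l (x + c) (y + c) l m hl hm hlm
    have e : l • (x + c) + m • (y + c) = l • x + m • y + c := by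
      have : c = (l + m) • c := by rw [hlm, one_smul]
      nth_rewrite 3 [this]
      simp only [smul_add, add_smul]
      abel
    rw [e] at this
    exact this
  · rw [← hYmap]
    exact Measure.isProbabilityMeasure_map hYm.aemeasurable
  · intro a ha
    rw [← hYmap, integrable_map_measure (sqm a).aestronglyMeasurable hYm.aemeasurable]
    exact hIntg2 a ha
  · intro a ha
    rw [← hYmap, integral_map hYm.aemeasurable (sqm a).aestronglyMeasurable, heq2]
    exact (hcov a (eNorm_one.2 ha)).2
  · intro a ha
    rw [← hYmap, integral_map hYm.aemeasurable (sqm a).aestronglyMeasurable, heq2]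
    exact (hcov a (eNorm_one.2 ha)).1
  · intro a
    rw [← hYmap, integral_map hYm.aemeasurable (meas_dot a).aestronglyMeasurable]
    unfold dotProduct
    rw [integral_finsetSum _ fun i _ => (hYi i).const_mul (a i)]
    refine Finset.sum_eq_zero fun i _ => ?_
    rw [integral_const_mul, hYi0 i, mul_zero]
  · intro u v hu
    have hXu : Integrable (fun ω => u ⬝ᵥ X ω) μ := by
      refine ((hIntg1 u hu).add (integrable_const (u ⬝ᵥ c))).congr
        (Filter.Eventually.of_forall fun ω => ?_)
      simp [hY, dotProduct_sub]
    have hI : Integrable (fun ω => Ifn u v (X ω)) μ := by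
      refine hXu.abs.mono' ((meas_Ifn u v).comp hX).aestronglyMeasurable
        (Filter.Eventually.of_forall fun ω => ?_)
      rw [Real.norm_eq_abs, abs_of_nonneg (Ifn_nonneg _ _ _)]
      exact Ifn_le _ _ _
    have hmm : Measurable fun y => ENNReal.ofReal (Ifn u v (y + c)) :=
      ((meas_Ifn u v).comp (measurable_id.add_const c)).ennreal_ofReal
    rw [ofReal_integral_eq_lintegral_ofReal hI
      (Filter.Eventually.of_forall fun ω => Ifn_nonneg _ _ _), ← hYmap,
      lintegral_map hmm hYm]
    refine lintegral_congr fun ω => ?_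
    simp [hY]

/-- If `X` has a log-concave density, `E[X] = 0`, and the eigenvalues of
`Cov(X)` lie in `[C⁻¹, C]`, then there is `L > 0` depending only on `C` with
`L⁻¹ ‖u−v‖² ≤ E[|u'X| 1(sgn(u'X) ≠ sgn(v'X))] ≤ L ‖u−v‖²` for all unit vectors `u, v`; the
upper bound holds more generally if `E[X] = 0` is replaced by `‖E[X]‖ ≤ C`. -/
theorem stmt_7 (C : ℝ) (hC : 0 < C) :
    ∃ L : ℝ, 0 < L ∧
      ∀ (d : ℕ), 1 ≤ d →
      ∀ (Ω : Type) (_ : MeasurableSpace Ω) (μ : Measure Ω), IsProbabilityMeasure μ →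
      ∀ (X : Ω → Fin d → ℝ), Measurable X →
      ∀ p : (Fin d → ℝ) → ℝ, (∀ x, 0 ≤ p x) → IsLogConcaveFn p →
        μ.map X = MeasureTheory.volume.withDensity (fun x => ENNReal.ofReal (p x)) →
        (∀ a : Fin d → ℝ, eNorm a = 1 →
          C⁻¹ ≤ ∫ ω, (a ⬝ᵥ X ω - a ⬝ᵥ (fun i => ∫ ω', X ω' i ∂μ)) ^ 2 ∂μ ∧
            ∫ ω, (a ⬝ᵥ X ω - a ⬝ᵥ (fun i => ∫ ω', X ω' i ∂μ)) ^ 2 ∂μ ≤ C) →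
        -- centered case: two-sided bound
        (((∀ i, ∫ ω, X ω i ∂μ = 0) →
            ∀ u v : Fin d → ℝ, eNorm u = 1 → eNorm v = 1 →
              L⁻¹ * eNorm (u - v) ^ 2
                  ≤ ∫ ω, |u ⬝ᵥ X ω| *
                      (if Real.sign (u ⬝ᵥ X ω) = Real.sign (v ⬝ᵥ X ω) then 0 else 1) ∂μ ∧
                ∫ ω, |u ⬝ᵥ X ω| *
                      (if Real.sign (u ⬝ᵥ X ω) = Real.sign (v ⬝ᵥ X ω) then 0 else 1) ∂μ
                  ≤ L * eNorm (u - v) ^ 2) ∧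
          -- non-centered case: upper bound only
          (eNorm (fun i => ∫ ω, X ω i ∂μ) ≤ C →
            ∀ u v : Fin d → ℝ, eNorm u = 1 → eNorm v = 1 →
              ∫ ω, |u ⬝ᵥ X ω| *
                    (if Real.sign (u ⬝ᵥ X ω) = Real.sign (v ⬝ᵥ X ω) then 0 else 1) ∂μ
                ≤ L * eNorm (u - v) ^ 2)) := by
  obtain ⟨L1, hL1, HU⟩ := upper_q C hC
  obtain ⟨w, hw, HL⟩ := lower_q C hC
  refine ⟨L1 + w⁻¹, by positivity, ?_⟩
  intro d _ Ω _ μ hμ X hX p hp0 hp hmap hcov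
  obtain ⟨q, hq, hqI⟩ := reduce C hC μ X hX p hp0 hp hmap _ rfl hcov
  have hw' : (0:ℝ) < w⁻¹ := by positivity
  have hUp : eNorm (fun i => ∫ ω, X ω i ∂μ) ≤ C →
      ∀ u v : Fin d → ℝ, eNorm u = 1 → eNorm v = 1 →
        ∫ ω, Ifn u v (X ω) ∂μ ≤ (L1 + w⁻¹) * eNorm (u - v) ^ 2 := by
    intro hc u v hu hv
    have h := HU d q hq _ hc u v (eNorm_one.1 hu) (eNorm_one.1 hv)
    rw [← hqI u v (eNorm_one.1 hu), ENNReal.ofReal_le_ofReal_iff (by positivity)] at h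
    refine h.trans ?_
    gcongr
    linarith
  refine ⟨fun hz u v hu hv => ⟨?_, ?_⟩, fun hc u v hu hv => hUp hc u v hu hv⟩
  · have h := HL d q hq u v (eNorm_one.1 hu) (eNorm_one.1 hv)
    have hc0 : (fun i => ∫ ω, X ω i ∂μ) = 0 := funext hz
    have h2 := hqI u v (eNorm_one.1 hu)
    simp only [hc0, add_zero] at h2
    rw [← h2, ENNReal.ofReal_le_ofReal_iff
      (integral_nonneg fun ω => Ifn_nonneg _ _ _)] at h
    refine le_trans ?_ h
    gcongr
    exact inv_le_of_inv_le₀ hw (by linarith)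
  · refine hUp ?_ u v hu hv
    have hc0 : (fun i => ∫ ω, X ω i ∂μ) = 0 := funext hz
    rw [hc0]
    simp [eNorm, hC.le]
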